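/- Conjecture 5.2 of Adem–Ge–Pan–Petrosyan is false: there exist a finite cyclic group G, a finitely generated ℤG-lattice L (i.e., a free abelian group of finite rank with a G-action), and an integer k ≥ 0 such that H^k(L ⋊ G, ℤ) is not isomorphic to the direct sum ⊕_{i+j=k} H^i(G, H^j(L, ℤ)). -/

import Mathlib

open Matrix

namespace Crystal

/-- The lattice `ℤ^n`, written multiplicatively so that it can be a factor of a semidirect
product of groups. -/
abbrev Lat (n : ℕ) : Type := Multiplicative (Fin n → ℤ)

/-- The invertible integer matrix determined by `M` with `M ^ (m + 1) = 1`. -/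
def matUnit {n : ℕ} (M : Matrix (Fin n) (Fin n) ℤ) (m : ℕ) (hm : M ^ (m + 1) = 1) :
    (Matrix (Fin n) (Fin n) ℤ)ˣ :=
  ⟨M, M ^ m, by rw [← pow_succ']; exact hm, by rw [← pow_succ]; exact hm⟩

/-- Linear automorphisms of `ℤ^n` as multiplicative automorphisms of the multiplicative
version of `ℤ^n`. -/
def linToAut (n : ℕ) : ((Fin n → ℤ) ≃ₗ[ℤ] (Fin n → ℤ)) →* MulAut (Lat n) :=
  MonoidHom.mk' (fun e => AddEquiv.toMultiplicative e.toAddEquiv) (fun _ _ => rfl)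

/-- An invertible integer matrix acts on the (multiplicative) lattice `ℤ^n` by (left)
matrix-vector multiplication. -/
def glToAut (n : ℕ) : (Matrix (Fin n) (Fin n) ℤ)ˣ →* MulAut (Lat n) :=
  (linToAut n).comp
    ((LinearMap.GeneralLinearGroup.generalLinearEquiv ℤ (Fin n → ℤ)).toMonoidHom.comp
      (Matrix.GeneralLinearGroup.toLin).toMonoidHom)

/-- The homomorphism from `ℤ/m` (written multiplicatively) to a group `G` sending the
generator `1` to a chosen element `α` satisfying `α ^ m = 1`. -/
def zmodHom {G : Type*} [Group G] (m : ℕ) [NeZero m] (α : G) (hα : α ^ m = 1) :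
    Multiplicative (ZMod m) →* G :=
  MonoidHom.mk' (fun g => α ^ (g.toAdd.val)) (by
    intro a b
    show α ^ (ZMod.val (a.toAdd + b.toAdd)) = α ^ (ZMod.val a.toAdd) * α ^ (ZMod.val b.toAdd)
    rw [ZMod.val_add, ← pow_eq_pow_mod _ hα, pow_add])

/-- The action of `ℤ/q` on the lattice `ℤ^n` in which the generator `1` of `ℤ/q` acts by left
multiplication by the integer matrix `M`; `M` is required to satisfy `M ^ q = 1`. -/
def matAction {n : ℕ} (q : ℕ) [NeZero q] (M : Matrix (Fin n) (Fin n) ℤ)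
    (hq : M ^ q = 1) : Multiplicative (ZMod q) →* MulAut (Lat n) :=
  zmodHom q (glToAut n (matUnit M (q - 1) (by
      rwa [Nat.sub_add_cancel (Nat.one_le_iff_ne_zero.2 (NeZero.ne q))])))
    (by
      rw [← map_pow]
      convert map_one (glToAut n)
      ext i j
      rw [Units.val_pow_eq_pow_val]
      simp [matUnit, hq])

/-- The crystallographic group `ℤ^n ⋊ ℤ/q` in which the generator `1` of `ℤ/q` acts on the
lattice `ℤ^n` by left multiplication by the integer matrix `M` (with `M ^ q = 1`). -/
abbrev Crys {n : ℕ} (q : ℕ) [NeZero q] (M : Matrix (Fin n) (Fin n) ℤ) (hq : M ^ q = 1) : Type :=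
  SemidirectProduct (Lat n) (Multiplicative (ZMod q)) (matAction q M hq)


open CategoryTheory groupCohomology

variable {k : Type} [CommRing k]

lemma comp_contractNth {G H : Type*} [Monoid G] [Monoid H] (f : G →* H) {n : ℕ}
    (j : Fin (n + 1)) (g : Fin (n + 1) → G) (i : Fin n) :
    f (Fin.contractNth j (· * ·) g i) = Fin.contractNth j (· * ·) (fun l => f (g l)) i := by
  rcases lt_trichotomy (i : ℕ) j with h | h | h
  · rw [Fin.contractNth_apply_of_lt _ _ _ _ h, Fin.contractNth_apply_of_lt _ _ _ _ h]
  · rw [Fin.contractNth_apply_of_eq _ _ _ _ h, Fin.contractNth_apply_of_eq _ _ _ _ h,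
      _root_.map_mul]
  · rw [Fin.contractNth_apply_of_gt _ _ _ _ h, Fin.contractNth_apply_of_gt _ _ _ _ h]

/-- The map of inhomogeneous cochain complexes induced (contravariantly in the group,
covariantly in the coefficients) by a group homomorphism `f : H →* G` together with a
compatible linear map `τ : A → B` of coefficients. -/
def cochainsMap {G H : Type} [Group G] [Group H] (A : Rep k G) (B : Rep k H)
    (f : H →* G) (τ : A →ₗ[k] B)
    (hcomp : ∀ (h : H) (a : A), τ (A.ρ (f h) a) = B.ρ h (τ a)) :
    inhomogeneousCochains A ⟶ inhomogeneousCochains B where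
  f n := ModuleCat.ofHom
    { toFun := fun F v => τ (F (fun i => f (v i)))
      map_add' := fun x y => by funext v; simp
      map_smul' := fun r x => by funext v; simp }
  comm' i j hij := by
    have hij' : i + 1 = j := hij
    subst hij'
    rw [inhomogeneousCochains.d_def, inhomogeneousCochains.d_def]
    ext F v
    simp only [ModuleCat.hom_comp, LinearMap.comp_apply]
    show (inhomogeneousCochains.d B i).hom (fun w => τ (F (fun l => f (w l)))) v
      = τ ((inhomogeneousCochains.d A i).hom F (fun l => f (v l)))
    simp only [inhomogeneousCochains.d_hom_apply, map_add, map_sum, _root_.map_smul]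
    congr 1
    · exact (hcomp (v 0) _).symm
    · refine Finset.sum_congr rfl fun j' _ => ?_
      have hc : (fun l => f (j'.contractNth (· * ·) v l))
          = j'.contractNth (· * ·) (fun l => f (v l)) := by
        funext l
        exact comp_contractNth f j' v l
      rw [hc]

lemma cochainsMap_eq_id {G : Type} [Group G] (A : Rep k G) (f : G →* G) (τ : A →ₗ[k] A)
    (hcomp : ∀ (h : G) (a : A), τ (A.ρ (f h) a) = A.ρ h (τ a))
    (hf : ∀ x, f x = x) (hτ : ∀ a, τ a = a) :
    cochainsMap A A f τ hcomp = 𝟙 _ := by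
  apply HomologicalComplex.Hom.ext
  funext n
  ext F v
  show τ (F (fun i => f (v i))) = F v
  simp only [hf, hτ]

lemma cochainsMap_comp {G H K : Type} [Group G] [Group H] [Group K]
    (A : Rep k G) (B : Rep k H) (C : Rep k K)
    (f₁ : H →* G) (τ₁ : A →ₗ[k] B) (h₁ : ∀ (h : H) (a : A), τ₁ (A.ρ (f₁ h) a) = B.ρ h (τ₁ a))
    (f₂ : K →* H) (τ₂ : B →ₗ[k] C) (h₂ : ∀ (h : K) (a : B), τ₂ (B.ρ (f₂ h) a) = C.ρ h (τ₂ a))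
    (f₃ : K →* G) (τ₃ : A →ₗ[k] C) (h₃ : ∀ (h : K) (a : A), τ₃ (A.ρ (f₃ h) a) = C.ρ h (τ₃ a))
    (hf : ∀ x, f₁ (f₂ x) = f₃ x) (hτ : ∀ a, τ₂ (τ₁ a) = τ₃ a) :
    cochainsMap A B f₁ τ₁ h₁ ≫ cochainsMap B C f₂ τ₂ h₂ = cochainsMap A C f₃ τ₃ h₃ := by
  apply HomologicalComplex.Hom.ext
  funext n
  ext F v
  show τ₂ (τ₁ (F (fun i => f₁ (f₂ (v i))))) = τ₃ (F (fun i => f₃ (v i)))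
  simp only [hf]
  exact hτ _

/-- Given an action `φ` of a group `G` on a group `L` and a representation `ψ` of `G` on a
`k`-module `V`, this is `H^j(L, V)` (with `L` acting trivially on the coefficients `V`),
endowed with the `G`-action functorially induced by the action of `G` on `L` and on `V`:
`g` acts via the conjugation automorphism `φ g⁻¹` of `L` and via `ψ g` on `V`. -/
noncomputable def cohRep {G L V : Type} [Group G] [Group L] [AddCommGroup V] [Module k V]
    (φ : G →* MulAut L) (ψ : Representation k G V) (j : ℕ) : Rep k G :=
  Rep.of (X := groupCohomology (Rep.trivial k L V) j)
    { toFun := fun g => ModuleCat.Hom.hom (HomologicalComplex.homologyMap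
        (cochainsMap (Rep.trivial k L V) (Rep.trivial k L V) (φ g⁻¹).toMonoidHom (ψ g)
          (fun _ _ => rfl)) j)
      map_one' := by
        have h := cochainsMap_eq_id (Rep.trivial k L V) (φ 1⁻¹).toMonoidHom (ψ 1)
          (fun _ _ => rfl) (fun x => by simp) (fun a => by simp)
        rw [h]
        exact congrArg ModuleCat.Hom.hom (HomologicalComplex.homologyMap_id _ j)
      map_mul' := fun g₁ g₂ => by
        have h := cochainsMap_comp (Rep.trivial k L V) (Rep.trivial k L V) (Rep.trivial k L V)
          (φ g₂⁻¹).toMonoidHom (ψ g₂) (fun _ _ => rfl)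
          (φ g₁⁻¹).toMonoidHom (ψ g₁) (fun _ _ => rfl)
          (φ (g₁ * g₂)⁻¹).toMonoidHom (ψ (g₁ * g₂)) (fun _ _ => rfl)
          (fun x => by simp [_root_.mul_inv_rev]) (fun a => by simp)
        rw [← h, HomologicalComplex.homologyMap_comp]
        rfl }


/-- `H^i(G, H^j(L, ℤ))`: the `i`-th cohomology of the cyclic group `ℤ/q` with coefficients in
the `j`-th cohomology of the lattice `ℤ^n` (with trivial `ℤ` coefficients), where the
`ℤ/q`-action on `H^j(ℤ^n, ℤ)` is the one functorially induced by the matrix action on the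
lattice. -/
noncomputable abbrev cohOfCoh {n : ℕ} (q : ℕ) [NeZero q] (M : Matrix (Fin n) (Fin n) ℤ)
    (hq : M ^ q = 1) (i j : ℕ) : ModuleCat ℤ :=
  groupCohomology
    (cohRep (matAction q M hq) (1 : Representation ℤ (Multiplicative (ZMod q)) ℤ) j) i

/-- `H^k(Γ, ℤ)` for `Γ = ℤ^n ⋊ ℤ/q`, with trivial coefficients `ℤ`. -/
noncomputable abbrev cohCrys {n : ℕ} (q : ℕ) [NeZero q] (M : Matrix (Fin n) (Fin n) ℤ)
    (hq : M ^ q = 1) (k : ℕ) : ModuleCat ℤ :=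
  groupCohomology (Rep.trivial ℤ (Crys q M hq) ℤ) k

end Crystal

open CategoryTheory

open CategoryTheory

namespace AGPP

/-- comparison of indices along an exact sequence -/
lemma index_step {a q w : Type*} [AddCommGroup a] [AddCommGroup q] [AddCommGroup w]
    (d : a →+ q) (κ : q →+ w) (P : AddSubgroup q) (R K : AddSubgroup w)
    (hex : ∀ x, κ x = 0 → ∃ y, d y = x) (hex' : ∀ y, κ (d y) = 0)
    (hPR : P.map κ = R) (hK : ∀ x, κ x ∈ K) (hfin : R.relIndex K ≠ 0)  :
    P.index ≤ R.relIndex K * (P.comap d).index ∧ ((P.comap d).index ≠ 0 → P.index ≠ 0) := by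
  have hker : κ.ker = d.range := by
    ext x
    simp only [AddMonoidHom.mem_ker, AddMonoidHom.mem_range]
    exact ⟨hex x, by rintro ⟨y, rfl⟩; exact hex' y⟩
  have h1 : P.relIndex (P ⊔ κ.ker) * (P ⊔ κ.ker).index = P.index :=
    AddSubgroup.relIndex_mul_index le_sup_left
  have h2 : (P ⊔ κ.ker) = R.comap κ := by
    rw [← hPR, AddSubgroup.comap_map_eq]
  have h3 : (R.comap κ).index = R.relIndex κ.range := AddSubgroup.index_comap R κ
  have hle : κ.range ≤ K := by rintro _ ⟨x, rfl⟩; exact hK x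
  have h4 : R.relIndex κ.range ≤ R.relIndex K :=
    AddSubgroup.relIndex_le_of_le_right hle hfin
  have h5 : P.relIndex (P ⊔ κ.ker) = P.relIndex κ.ker := by
    rw [AddSubgroup.relIndex_sup_left]
  have h6 : P.relIndex κ.ker = (P.comap d).index := by
    rw [hker, AddSubgroup.index_comap]
  rw [← h1, h5, h6, h2, h3, mul_comm]
  refine ⟨Nat.mul_le_mul_right _ h4, fun h => mul_ne_zero ?_ h⟩
  intro h0
  exact hfin (AddSubgroup.relIndex_eq_zero_of_le_right hle h0)

/-- torsion subgroup -/
abbrev tors (A : Type*) [AddCommGroup A] : AddSubgroup A := AddCommGroup.torsion A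

/-- the main counting argument -/
theorem counting {a0 a2 a4 q1 q3 w0 w1 w2 w3 w4 : Type*}
    [AddCommGroup a0] [AddCommGroup a2] [AddCommGroup a4] [AddCommGroup q1] [AddCommGroup q3]
    [AddCommGroup w0] [AddCommGroup w1] [AddCommGroup w2] [AddCommGroup w3] [AddCommGroup w4]
    (θ0 ν0 : w0 →+ w0) (θ1 ν1 : w1 →+ w1) (θ2 ν2 : w2 →+ w2) (θ3 ν3 : w3 →+ w3)
    (θ4 : w4 →+ w4)
    (i0 : a0 →+ w0) (i2 : a2 →+ w2) (i4 : a4 →+ w4)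
    (s0 : w0 →+ a0) (s2 : w2 →+ a2)
    (p1 : w1 →+ q1) (p3 : w3 →+ q3) (κ1 : q1 →+ w1) (κ3 : q3 →+ w3)
    (D1 : q1 →+ a2) (D3 : q3 →+ a4) (E0 : a0 →+ q1) (E2 : a2 →+ q3)
    (is0 : ∀ x, i0 (s0 x) = ν0 x) (is2 : ∀ x, i2 (s2 x) = ν2 x)
    (κp1 : ∀ x, κ1 (p1 x) = θ1 x) (κp3 : ∀ x, κ3 (p3 x) = θ3 x)
    (θi0 : ∀ x, θ0 (i0 x) = 0) (θi2 : ∀ x, θ2 (i2 x) = 0) (θi4 : ∀ x, θ4 (i4 x) = 0)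
    (νκ1 : ∀ x, ν1 (κ1 x) = 0) (νκ3 : ∀ x, ν3 (κ3 x) = 0)
    (hi0 : ∀ x, i0 x = 0 → x = 0)
    (hκ1 : ∀ x, κ1 x = 0 → ∃ y, E0 y = x) (hκ1' : ∀ y, κ1 (E0 y) = 0)
    (hE0 : ∀ x, E0 (s0 x) = 0)
    (hi2 : ∀ x, i2 x = 0 → ∃ y, D1 y = x) (hi2' : ∀ y, i2 (D1 y) = 0)
    (hD1 : ∀ x, D1 (p1 x) = 0)
    (hκ3 : ∀ x, κ3 x = 0 → ∃ y, E2 y = x) (hκ3' : ∀ y, κ3 (E2 y) = 0)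
    (hE2 : ∀ x, E2 (s2 x) = 0)
    (hi4 : ∀ x, i4 x = 0 → ∃ y, D3 y = x)
    (hD3 : ∀ x, D3 (p3 x) = 0)
    (y : a2) (hy : ∀ x, s2 x ≠ y) (hy' : ∃ z, p3 z = E2 y)
    (f0 : ν0.range.relIndex θ0.ker ≠ 0) (f1 : θ1.range.relIndex ν1.ker ≠ 0)
    (f2 : ν2.range.relIndex θ2.ker ≠ 0) (f3 : θ3.range.relIndex ν3.ker ≠ 0)
    [Finite (tors w4)] :
    Finite (tors a4) ∧ Nat.card (tors a4) <
      Nat.card (tors w4 ⊓ θ4.ker : AddSubgroup w4) * (θ3.range.relIndex ν3.ker *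
        (ν2.range.relIndex θ2.ker * (θ1.range.relIndex ν1.ker * ν0.range.relIndex θ0.ker))) := by
  -- degree 0
  have A0 := index_step (0 : PUnit.{1} →+ a0) i0 s0.range ν0.range θ0.ker
    (fun x hx => ⟨0, by simp [hi0 x hx]⟩) (fun _ => by simp)
    (by rw [AddMonoidHom.map_range]; congr 1; ext x; exact is0 x)
    (fun x => θi0 x) f0
  have e0 : (s0.range.comap (0 : PUnit.{1} →+ a0)).index = 1 := by
    rw [AddSubgroup.index_eq_one]; ext x; simp
  rw [e0, mul_one] at A0
  have A1 := index_step E0 κ1 p1.range θ1.range ν1.ker hκ1 hκ1'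
    (by rw [AddMonoidHom.map_range]; congr 1; ext x; exact κp1 x)
    (fun x => νκ1 x) f1
  have e1 : s0.range ≤ p1.range.comap E0 := by
    rintro _ ⟨x, rfl⟩; exact ⟨0, by simp [hE0]⟩
  have A2 := index_step D1 i2 s2.range ν2.range θ2.ker hi2 hi2'
    (by rw [AddMonoidHom.map_range]; congr 1; ext x; exact is2 x)
    (fun x => θi2 x) f2
  have e2 : p1.range ≤ s2.range.comap D1 := by
    rintro _ ⟨x, rfl⟩; exact ⟨0, by simp [hD1]⟩
  have A3 := index_step E2 κ3 p3.range θ3.range ν3.ker hκ3 hκ3'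
    (by rw [AddMonoidHom.map_range]; congr 1; ext x; exact κp3 x)
    (fun x => νκ3 x) f3
  have e3 : s2.range < p3.range.comap E2 := by
    refine lt_of_le_of_ne ?_ ?_
    · rintro _ ⟨x, rfl⟩; exact ⟨0, by simp [hE2]⟩
    · intro h
      have : y ∈ p3.range.comap E2 := hy'
      rw [← h] at this
      obtain ⟨x, hx⟩ := this
      exact hy x hx
  have n0 : s0.range.index ≠ 0 := A0.2 one_ne_zero
  have le_of {A : Type _} [AddCommGroup A] {H K : AddSubgroup A} (h : H ≤ K) (h0 : H.index ≠ 0) :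
      K.index ≠ 0 ∧ K.index ≤ H.index :=
    ⟨fun hk => h0 (Nat.eq_zero_of_zero_dvd (hk ▸ AddSubgroup.index_dvd_of_le h)),
      Nat.le_of_dvd (Nat.pos_of_ne_zero h0) (AddSubgroup.index_dvd_of_le h)⟩
  have n1 : p1.range.index ≠ 0 := A1.2 (le_of e1 n0).1
  have n2 : s2.range.index ≠ 0 := A2.2 (by
    intro hk
    exact n1 (Nat.eq_zero_of_zero_dvd (hk ▸ AddSubgroup.index_dvd_of_le e2)))
  have n3' : (p3.range.comap E2).index < s2.range.index := by
    have : AddSubgroup.FiniteIndex s2.range := ⟨n2⟩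
    exact AddSubgroup.index_strictAnti e3
  have n3 : p3.range.index ≠ 0 := A3.2 (by
    intro hk
    exact n2 (Nat.eq_zero_of_zero_dvd (hk ▸ AddSubgroup.index_dvd_of_le e3.le)))
  have l1 : (p1.range.comap E0).index ≤ s0.range.index := (le_of e1 n0).2
  have l2 : (s2.range.comap D1).index ≤ p1.range.index :=
    Nat.le_of_dvd (Nat.pos_of_ne_zero n1) (AddSubgroup.index_dvd_of_le e2)
  have key : p3.range.index < θ3.range.relIndex ν3.ker *
        (ν2.range.relIndex θ2.ker * (θ1.range.relIndex ν1.ker * ν0.range.relIndex θ0.ker)) := by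
    calc p3.range.index ≤ _ := A3.1
      _ < θ3.range.relIndex ν3.ker * s2.range.index :=
          Nat.mul_lt_mul_of_pos_left n3' (Nat.pos_of_ne_zero f3)
      _ ≤ _ := by
          refine Nat.mul_le_mul_left _ (A2.1.trans (Nat.mul_le_mul_left _ (l2.trans
            (A1.1.trans (Nat.mul_le_mul_left _ (l1.trans A0.1))))))
  -- the torsion of a4
  let g : tors a4 →+ (tors w4 ⊓ θ4.ker : AddSubgroup w4) :=
    { toFun := fun x => ⟨i4 x.1, i4.isOfFinAddOrder x.2, θi4 x.1⟩
      map_zero' := by ext; simp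
      map_add' := fun x y => by ext; simp }
  have hk1 : D3.ker.index ≠ 0 ∧ D3.ker.index ≤ p3.range.index := by
    have h : p3.range ≤ D3.ker := by rintro _ ⟨x, rfl⟩; exact hD3 x
    exact ⟨fun hk => n3 (Nat.eq_zero_of_zero_dvd (hk ▸ AddSubgroup.index_dvd_of_le h)),
      Nat.le_of_dvd (Nat.pos_of_ne_zero n3) (AddSubgroup.index_dvd_of_le h)⟩
  rw [AddSubgroup.index_ker] at hk1
  have : Finite D3.range := Nat.finite_of_card_ne_zero hk1.1
  let j : g.ker → D3.range := fun x => ⟨x.1.1, hi4 _ (congrArg Subtype.val x.2)⟩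
  have hj : Function.Injective j := by
    intro x x' h
    have h' : (j x).1 = (j x').1 := by rw [h]
    exact Subtype.ext (Subtype.ext h')
  have : Finite g.ker := Finite.of_injective j hj
  have hc1 : Nat.card g.ker ≤ p3.range.index := (Nat.card_le_card_of_injective j hj).trans hk1.2
  have : Finite (tors w4 ⊓ θ4.ker : AddSubgroup w4) :=
    Finite.of_injective (fun x => (⟨x.1, x.2.1⟩ : tors w4)) (fun x x' h =>
      Subtype.ext (congrArg (fun z => z.1) h))
  have hc2 : Nat.card g.range ≤ Nat.card (tors w4 ⊓ θ4.ker : AddSubgroup w4) :=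
    Nat.card_le_card_of_injective _ Subtype.val_injective
  have hm : Nat.card g.ker * Nat.card g.range = Nat.card (tors a4) := by
    rw [← AddSubgroup.index_ker]; exact AddSubgroup.card_mul_index _
  refine ⟨Nat.finite_of_card_ne_zero ?_, ?_⟩
  · rw [← hm]; exact mul_ne_zero Nat.card_pos.ne' Nat.card_pos.ne'
  · rw [← hm, mul_comm]
    calc Nat.card g.range * Nat.card g.ker ≤ _ := Nat.mul_le_mul hc2 hc1
      _ < _ := Nat.mul_lt_mul_of_pos_left key Nat.card_pos

end AGPP

open CategoryTheory
namespace AGPP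
open groupCohomology

section cls
variable {Γ : Type} [Group Γ] {Δ : Type} [Group Δ]

/-- the differential on cochains as a linear map -/
noncomputable def dd (A : Rep ℤ Γ) (n : ℕ) : ((Fin n → Γ) → A) →ₗ[ℤ] ((Fin (n+1) → Γ) → A) :=
  (inhomogeneousCochains.d A n).hom

/-- the class of a cocycle -/
noncomputable def cls (A : Rep ℤ Γ) (n : ℕ) (f : (Fin n → Γ) → A) (h : dd A n f = 0) :
    groupCohomology A n := π A n (cocyclesMk f h)

lemma cls_surj (A : Rep ℤ Γ) (n : ℕ) (x : groupCohomology A n) : ∃ f h, cls A n f h = x := by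
  refine groupCohomology_induction_on x fun z => ?_
  have h : dd A n (iCocycles A n z) = 0 := by
    have := congr($((inhomogeneousCochains A).iCycles_d n (n+1)) z)
    simpa [dd] using! this
  refine ⟨iCocycles A n z, h, ?_⟩
  unfold cls
  congr 1
  apply (ModuleCat.mono_iff_injective (iCocycles A n)).1 inferInstance
  rw [iCocycles_mk _ h]

lemma cls_eq_zero (A : Rep ℤ Γ) (n : ℕ) (f : (Fin (n+1) → Γ) → A) (h : dd A (n+1) f = 0) :
    cls A (n+1) f h = 0 ↔ ∃ g, dd A n g = f := by
  have hex : (ShortComplex.mk ((inhomogeneousCochains A).toCycles n (n+1))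
      ((inhomogeneousCochains A).homologyπ (n+1)) (by simp)).Exact :=
    ShortComplex.exact_of_g_is_cokernel _
      ((inhomogeneousCochains A).homologyIsCokernel n (n+1) (by simp))
  rw [ShortComplex.moduleCat_exact_iff] at hex
  constructor
  · intro h0
    obtain ⟨g, hg⟩ := hex _ h0
    refine ⟨g, ?_⟩
    have := congrArg (fun z => (iCocycles A (n+1)) z) hg
    have h2 := iCocycles_mk f h
    have h3 := congr($((inhomogeneousCochains A).toCycles_i n (n+1)) g)
    rw [← h2]
    refine Eq.trans ?_ this
    refine Eq.trans ?_ h3.symm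
    rw [inhomogeneousCochains.d_def]
    rfl
  · rintro ⟨g, hg⟩
    have : cocyclesMk f h = (inhomogeneousCochains A).toCycles n (n+1) g := by
      apply (ModuleCat.mono_iff_injective (iCocycles A (n+1))).1 inferInstance
      rw [iCocycles_mk _ h]
      have h3 := congr($((inhomogeneousCochains A).toCycles_i n (n+1)) g)
      rw [inhomogeneousCochains.d_def] at h3
      rw [← hg]
      exact h3.symm
    unfold cls
    rw [this]
    exact congr($((inhomogeneousCochains A).toCycles_comp_homologyπ n (n+1)) g)

/-- map on cohomology induced by a map of cochain complexes -/
noncomputable def hm {A : Rep ℤ Γ} {B : Rep ℤ Δ}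
    (F : inhomogeneousCochains A ⟶ inhomogeneousCochains B) (n : ℕ) :
    groupCohomology A n →ₗ[ℤ] groupCohomology B n :=
  (HomologicalComplex.homologyMap F n).hom

lemma hm_comm {A : Rep ℤ Γ} {B : Rep ℤ Δ}
    (F : inhomogeneousCochains A ⟶ inhomogeneousCochains B) (n : ℕ) (f : (Fin n → Γ) → A) :
    dd B n ((F.f n).hom f) = (F.f (n+1)).hom (dd A n f) := by
  have := congr($(F.comm n (n+1)) f)
  simpa [dd] using! this

lemma hm_cls {A : Rep ℤ Γ} {B : Rep ℤ Δ}
    (F : inhomogeneousCochains A ⟶ inhomogeneousCochains B) (n : ℕ) (f : (Fin n → Γ) → A)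
    (h : dd A n f = 0) (h' : dd B n ((F.f n).hom f) = 0) :
    hm F n (cls A n f h) = cls B n ((F.f n).hom f) h' := by
  have h1 := congr($(HomologicalComplex.homologyπ_naturality F n) (cocyclesMk f h))
  refine Eq.trans h1 ?_
  unfold cls
  refine congrArg (π B n) ?_
  apply (ModuleCat.mono_iff_injective (iCocycles B n)).1 inferInstance
  rw [iCocycles_mk _ h']
  have h2 := congr($(HomologicalComplex.cyclesMap_i F n) (cocyclesMk f h))
  refine Eq.trans h2 ?_
  exact congrArg (F.f n) (iCocycles_mk f h)

lemma hm_comp {Ξ : Type} [Group Ξ] {A : Rep ℤ Γ} {B : Rep ℤ Δ} {C : Rep ℤ Ξ}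
    (F : inhomogeneousCochains A ⟶ inhomogeneousCochains B)
    (F' : inhomogeneousCochains B ⟶ inhomogeneousCochains C) (n : ℕ) (x) :
    hm (F ≫ F') n x = hm F' n (hm F n x) := by
  unfold hm
  rw [HomologicalComplex.homologyMap_comp]
  rfl

lemma hm_id {A : Rep ℤ Γ} (n : ℕ) (x) : hm (𝟙 (inhomogeneousCochains A)) n x = x := by
  unfold hm
  rw [HomologicalComplex.homologyMap_id]
  rfl

lemma hm_add {A : Rep ℤ Γ} {B : Rep ℤ Δ}
    (F F' : inhomogeneousCochains A ⟶ inhomogeneousCochains B) (n : ℕ) (x) :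
    hm (F + F') n x = hm F n x + hm F' n x := by
  unfold hm
  rw [HomologicalComplex.homologyMap_add]
  rfl

lemma hm_zero {A : Rep ℤ Γ} {B : Rep ℤ Δ} (n : ℕ) (x) :
    hm (0 : inhomogeneousCochains A ⟶ inhomogeneousCochains B) n x = 0 := by
  unfold hm
  rw [HomologicalComplex.homologyMap_zero]
  rfl

lemma hm_sub {A : Rep ℤ Γ} {B : Rep ℤ Δ}
    (F F' : inhomogeneousCochains A ⟶ inhomogeneousCochains B) (n : ℕ) (x) :
    hm (F - F') n x = hm F n x - hm F' n x := by
  unfold hm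
  rw [HomologicalComplex.homologyMap_sub]
  rfl

end cls
end AGPP

open CategoryTheory
namespace AGPP
open groupCohomology

section les
variable {Γ : Type} [Group Γ]

/-- map of cochain complexes induced by a map of coefficients -/
noncomputable abbrev cm {A B : Rep ℤ Γ} (f : A ⟶ B) :
    inhomogeneousCochains A ⟶ inhomogeneousCochains B :=
  groupCohomology.cochainsMap (MonoidHom.id Γ) f

lemma cm_apply {A B : Rep ℤ Γ} (f : A ⟶ B) (n : ℕ) (F : (Fin n → Γ) → A) (v) :
    ((cm f).f n).hom F v = f.hom (F v) := rfl

lemma shortExact_mk {k : Type} [CommRing k] {A B C : Rep.{0} k Γ} (f : A ⟶ B) (g : B ⟶ C)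
    (hf : ∀ a, f.hom a = 0 → a = 0) (hg : ∀ c, ∃ b, g.hom b = c)
    (h0 : ∀ a, g.hom (f.hom a) = 0) (hex : ∀ b, g.hom b = 0 → ∃ a, f.hom a = b) :
    ∃ w, (ShortComplex.mk f g w).ShortExact := by
  have w : f ≫ g = 0 := by
    apply Rep.hom_ext
    exact Representation.IntertwiningMap.ext (LinearMap.ext h0)
  refine ⟨w, ?_⟩
  have : Mono f := (Rep.mono_iff_injective f).2 (by
    intro x y hxy
    have : f.hom (x - y) = 0 := by rw [map_sub, sub_eq_zero]; exact hxy
    exact sub_eq_zero.1 (hf _ this))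
  have : Epi g := (Rep.epi_iff_surjective g).2 hg
  refine { exact := ?_ }
  have h1 : ((ShortComplex.mk f g w).map (forget₂ (Rep.{0} k Γ) (ModuleCat.{0} k))).Exact := by
    rw [ShortComplex.moduleCat_exact_iff]
    intro x hx
    exact hex x hx
  exact (ShortComplex.exact_map_iff_of_faithful (ShortComplex.mk f g w)
    (forget₂ (Rep.{0} k Γ) (ModuleCat.{0} k))).1 h1

theorem les {A B C : Rep ℤ Γ} (f : A ⟶ B) (g : B ⟶ C)
    (hf : ∀ a, f.hom a = 0 → a = 0) (hg : ∀ c, ∃ b, g.hom b = c)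
    (h0 : ∀ a, g.hom (f.hom a) = 0) (hex : ∀ b, g.hom b = 0 → ∃ a, f.hom a = b) :
    ∃ D : ∀ n, groupCohomology C n →ₗ[ℤ] groupCohomology A (n+1),
      (∀ n x, hm (cm f) (n+1) x = 0 → ∃ y, D n y = x) ∧
      (∀ n y, hm (cm f) (n+1) (D n y) = 0) ∧
      (∀ n x, D n x = 0 → ∃ y, hm (cm g) n y = x) ∧
      (∀ n y, D n (hm (cm g) n y) = 0) ∧
      (∀ n (z : (Fin n → Γ) → C) (hz : dd C n z = 0) (y : (Fin n → Γ) → B)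
        (x : (Fin (n+1) → Γ) → A) (hx : dd A (n+1) x = 0),
        (∀ v, g.hom (y v) = z v) → (∀ v, f.hom (x v) = dd B n y v) →
        D n (cls C n z hz) = cls A (n+1) x hx) := by
  obtain ⟨w, hX⟩ := shortExact_mk f g hf hg h0 hex
  refine ⟨fun n => (δ hX n (n+1) rfl).hom, ?_, ?_, ?_, ?_, ?_⟩
  · intro n x hx
    have := mapShortComplex₁_exact hX (i := n) rfl
    rw [ShortComplex.moduleCat_exact_iff] at this
    exact this x hx
  · intro n y
    exact congr($((mapShortComplex₁ hX (i := n) rfl).zero) y)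
  · intro n x hx
    have := mapShortComplex₃_exact hX (i := n) rfl
    rw [ShortComplex.moduleCat_exact_iff] at this
    exact this x hx
  · intro n y
    exact congr($((mapShortComplex₃ hX (i := n) rfl).zero) y)
  · intro n z hz y x hx hy hxy
    have h1 : (inhomogeneousCochains C).d n (n+1) z = 0 := by
      rw [inhomogeneousCochains.d_def]; exact hz
    have h2 : f.hom ∘ x = (inhomogeneousCochains B).d n (n+1) y := by
      rw [inhomogeneousCochains.d_def]; funext v; exact hxy v
    exact δ_apply hX rfl z h1 y (funext hy) x h2

lemma hm_cm_zero {A B : Rep ℤ Γ} (f : A ⟶ B) (hf : ∀ a, f.hom a = 0 → a = 0) (x)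
    (hx : hm (cm f) 0 x = 0) : x = 0 := by
  have : Mono f := (Rep.mono_iff_injective f).2 (by
    intro x y hxy
    have : f.hom (x - y) = 0 := by rw [map_sub, sub_eq_zero]; exact hxy
    exact sub_eq_zero.1 (hf _ this))
  have : Mono (map (MonoidHom.id Γ) f 0) := inferInstance
  exact (ModuleCat.mono_iff_injective _).1 this (hx.trans (map_zero _).symm)

end les
end AGPP

open CategoryTheory
namespace AGPP
open groupCohomology

/-- a morphism of representations from an equivariant additive map -/
noncomputable def mkHom {k : Type} [CommRing k] {Γ : Type} [Group Γ] {A B : Rep.{0} k Γ}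
    (f : A →ₗ[k] B) (h : ∀ γ a, f (A.ρ γ a) = B.ρ γ (f a)) : A ⟶ B :=
  ConcreteCategory.ofHom (C := Rep.{0} k Γ) ⟨f, fun γ => LinearMap.ext fun a => h γ a⟩

lemma mkHom_apply {k : Type} [CommRing k] {Γ : Type} [Group Γ] {A B : Rep.{0} k Γ}
    (f : A →ₗ[k] B) (h : ∀ γ a, f (A.ρ γ a) = B.ρ γ (f a)) (a : A) : (mkHom f h).hom a = f a := rfl

/-- trivial coefficients -/
abbrev tr (Γ : Type) [Group Γ] : Rep.{0} ℤ Γ := Rep.trivial ℤ Γ ℤ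

/-- coinduced trivial module -/
noncomputable abbrev cnd {Γ : Type} [Group Γ] (S : Subgroup Γ) : Rep.{0} ℤ Γ :=
  Rep.coind S.subtype (tr S)

/-- solving a difference equation on the integers -/
lemma exists_antidiff (γ : ℤ → ℤ) : ∃ F : ℤ → ℤ, ∀ x, F (x+1) - F x = γ x := by
  refine ⟨fun x => match x with
    | Int.ofNat n => ∑ i ∈ Finset.range n, γ i
    | Int.negSucc n => - ∑ i ∈ Finset.range (n+1), γ (Int.negSucc i), ?_⟩
  rintro (n | n)
  · show (∑ i ∈ Finset.range (n+1), γ i) - (∑ i ∈ Finset.range n, γ i) = _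
    rw [Finset.sum_range_succ]; simp
  · cases n with
    | zero =>
      show (∑ i ∈ Finset.range 0, γ i) - (- ∑ i ∈ Finset.range (0+1), γ (Int.negSucc i)) = _
      simp
    | succ n =>
      show (- ∑ i ∈ Finset.range (n+1), γ (Int.negSucc i)) -
        (- ∑ i ∈ Finset.range (n+1+1), γ (Int.negSucc i)) = _
      rw [Finset.sum_range_succ _ (n+1)]; ring

lemma cnd_apply {Γ : Type} [Group Γ] (S : Subgroup Γ) (γ : Γ) (f : cnd S) (x : Γ) :
    ((cnd S).ρ γ f).1 x = f.1 (x * γ) := rfl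

lemma fg_shapiro {Γ : Type} [Group Γ] (S : Subgroup Γ) (j : ℕ)
    (h : Module.Finite ℤ (groupCohomology (tr S) j)) :
    Module.Finite ℤ (groupCohomology (cnd S) j) :=
  Module.Finite.equiv (coindIso (tr S) j).toLinearEquiv.symm

lemma fg_step {G : Type} [Group G] (p : G →* Multiplicative ℤ) (c : G)
    (hc : p c = Multiplicative.ofAdd 1)
    (hS : ∀ j, Module.Finite ℤ (groupCohomology (tr p.ker) j)) (j : ℕ) :
    Module.Finite ℤ (groupCohomology (tr G) j) := by
  have hW := fun j => fg_shapiro p.ker j (hS j)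
  have hcs : ∀ s : p.ker, c * s * c⁻¹ ∈ p.ker := fun s =>
    (MonoidHom.normal_ker p).conj_mem s.1 s.2 c
  have inv : ∀ (f : cnd p.ker) (x y : G), p x = p y → f.1 x = f.1 y := by
    intro f x y hxy
    have hm : x * y⁻¹ ∈ p.ker := by rw [MonoidHom.mem_ker, map_mul, map_inv, hxy, mul_inv_cancel]
    have := f.2 ⟨_, hm⟩ y
    simpa using this
  let f : tr G ⟶ cnd p.ker := mkHom
    { toFun := fun a => ⟨fun _ => a, fun _ _ => rfl⟩
      map_add' := fun _ _ => rfl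
      map_smul' := fun _ _ => rfl } (fun _ _ => rfl)
  let g : cnd p.ker ⟶ cnd p.ker := mkHom
    { toFun := fun a => ⟨fun x => a.1 (c * x) - a.1 x, fun s x => by
        show a.1 (c * (s.1 * x)) - a.1 (s.1 * x) = a.1 (c * x) - a.1 x
        congr 1
        · apply inv; simp [(MonoidHom.mem_ker).1 s.2]
        · apply inv; simp [(MonoidHom.mem_ker).1 s.2]⟩
      map_add' := fun a b => by
        apply Subtype.ext; funext x
        show (a.1 (c * x) + b.1 (c * x)) - (a.1 x + b.1 x) = (a.1 (c*x) - a.1 x) + (b.1 (c*x) - b.1 x)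
        ring
      map_smul' := fun r a => by
        apply Subtype.ext; funext x
        show (r * a.1 (c * x)) - (r * a.1 x) = r * (a.1 (c*x) - a.1 x)
        ring } (fun γ a => by
        apply Subtype.ext; funext x
        show a.1 (c * x * γ) - a.1 (x * γ) = a.1 (c * (x * γ)) - a.1 (x * γ)
        rw [mul_assoc])
  have hp : ∀ x : G, p x = p (c ^ (Multiplicative.toAdd (p x))) := by
    intro x
    rw [map_zpow, hc]
    apply Multiplicative.toAdd.injective
    simp
  obtain ⟨D, h1, h2, -, -, -⟩ := les f g
    (fun a ha => congrFun (congrArg Subtype.val ha) 1)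
    (fun b => by
      obtain ⟨F, hF⟩ := exists_antidiff (fun n => b.1 (c ^ n))
      refine ⟨⟨fun x => F (Multiplicative.toAdd (p x)), fun s x => ?_⟩, ?_⟩
      · show F (Multiplicative.toAdd (p (s.1 * x))) = F (Multiplicative.toAdd (p x))
        simp [(MonoidHom.mem_ker).1 s.2]
      · apply Subtype.ext; funext x
        show F (Multiplicative.toAdd (p (c * x))) - F (Multiplicative.toAdd (p x)) = b.1 x
        have : Multiplicative.toAdd (p (c * x)) = Multiplicative.toAdd (p x) + 1 := by
          rw [map_mul, hc, toAdd_mul, toAdd_ofAdd, add_comm]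
        rw [this, hF]
        exact inv b _ _ (hp x).symm)
    (fun a => by apply Subtype.ext; funext x; exact sub_self a)
    (fun b hb => by
      have hb' : ∀ x, b.1 (c * x) = b.1 x := fun x =>
        sub_eq_zero.1 (congrFun (congrArg Subtype.val hb) x)
      have hz : ∀ n : ℤ, b.1 (c ^ n) = b.1 1 := by
        intro n
        induction n using Int.induction_on with
        | zero => simp
        | succ i ih => rw [add_comm, _root_.zpow_add, zpow_one, hb', ih]
        | pred i ih =>
          rw [← hb', ← ih, ← _root_.zpow_one_add, show (1 + (-(i:ℤ) - 1)) = -i by ring]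
      refine ⟨b.1 1, ?_⟩
      apply Subtype.ext; funext x
      show b.1 1 = b.1 x
      rw [inv b _ _ (hp x), hz])
  cases j with
  | zero =>
    have h0 : ∀ a, f.hom a = 0 → a = 0 := fun a ha => congrFun (congrArg Subtype.val ha) 1
    exact Module.Finite.of_injective (hm (cm f) 0) (by
      rw [← LinearMap.ker_eq_bot, LinearMap.ker_eq_bot']
      exact fun x hx => hm_cm_zero f h0 x hx)
  | succ j =>
    have : Module.Finite ℤ (groupCohomology (cnd p.ker) j) := hW j
    have : Module.Finite ℤ (groupCohomology (cnd p.ker) (j+1)) := hW (j+1)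
    have : IsNoetherian ℤ (groupCohomology (tr G) (j+1)) :=
      isNoetherian_of_range_eq_ker (D j) (hm (cm f) (j+1)) (by
        ext x; constructor
        · rintro ⟨y, rfl⟩; exact h2 j y
        · intro hx; exact h1 j x hx)
    infer_instance

end AGPP

open CategoryTheory
namespace AGPP
open groupCohomology

theorem fg_lat (n : ℕ) : ∀ (G : Type) [Group G], (G ≃* Multiplicative (Fin n → ℤ)) →
    ∀ j, Module.Finite ℤ (groupCohomology (tr G) j) := by
  induction n with
  | zero =>
    intro G _ e j
    have : Subsingleton G := by
      refine ⟨fun a b => e.injective ?_⟩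
      apply Multiplicative.toAdd.injective
      exact Subsingleton.elim _ _
    cases j with
    | zero =>
      have : Module.Finite ℤ (Representation.invariants (tr G).ρ) :=
        Module.Finite.of_injective (Submodule.subtype _) (Submodule.subtype_injective _)
      exact Module.Finite.equiv (H0Iso (tr G)).toLinearEquiv.symm
    | succ j =>
      have h := isZero_groupCohomology_succ_of_subsingleton (tr G) j
      have := ModuleCat.subsingleton_of_isZero h
      infer_instance
  | succ n ih =>
    intro G _ e j
    let p : G →* Multiplicative ℤ := MonoidHom.mk' (fun x => Multiplicative.ofAdd (Multiplicative.toAdd (e x) 0)) (by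
      intro a b; rw [map_mul]; rfl)
    have key : ∀ x : G, x ∈ p.ker ↔ Multiplicative.toAdd (e x) 0 = 0 := fun x => Iff.rfl
    refine fg_step p (e.symm (Multiplicative.ofAdd (fun _ => 1))) ?_ ?_ j
    · show Multiplicative.ofAdd (Multiplicative.toAdd (e (e.symm (Multiplicative.ofAdd (fun _ => 1)))) 0) = _
      rw [e.apply_symm_apply]; rfl
    · apply ih
      exact
      { toFun := fun x => Multiplicative.ofAdd (fun i => Multiplicative.toAdd (e x.1) i.succ)
        invFun := fun y => ⟨e.symm (Multiplicative.ofAdd (Fin.cons 0 (Multiplicative.toAdd y))), by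
          rw [key, e.apply_symm_apply]; rfl⟩
        left_inv := fun x => by
          apply Subtype.ext
          apply e.injective
          show e (e.symm _) = _
          rw [e.apply_symm_apply]
          apply Multiplicative.toAdd.injective
          funext i
          refine Fin.cases ?_ (fun i => ?_) i
          · exact ((key _).1 x.2).symm
          · rfl
        right_inv := fun y => by
          apply Multiplicative.toAdd.injective
          funext i
          show Multiplicative.toAdd (e (e.symm _)) i.succ = _
          rw [e.apply_symm_apply]
          rfl
        map_mul' := fun x y => by
          show Multiplicative.ofAdd (fun i : Fin n => Multiplicative.toAdd (e (x.1 * y.1)) i.succ) = _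
          rw [map_mul]; rfl }

end AGPP

open CategoryTheory
namespace AGPP
open groupCohomology

section shap
variable {G L : Type} [Group G] [Group L] (φ : G →* MulAut L)

/-- the shear of a tuple in the semidirect product -/
def sh {n : ℕ} (g : G) (v : Fin n → L ⋊[φ] G) : Fin n → L := fun i =>
  φ (g * Fin.partialProd (fun l => (v l).right) i.castSucc) (v i).left

lemma sh_tail {n : ℕ} (g : G) (v : Fin (n+1) → L ⋊[φ] G) :
    sh φ (g * (v 0).right) (fun i => v i.succ) = fun i => sh φ g v i.succ := by
  funext i
  unfold sh
  rw [← Fin.succ_castSucc, Fin.partialProd_succ', mul_assoc]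
  rfl

lemma sh_contract {n : ℕ} (g : G) (v : Fin (n+1) → L ⋊[φ] G) (j : Fin (n+1)) :
    sh φ g (Fin.contractNth j (· * ·) v) = Fin.contractNth j (· * ·) (sh φ g v) := by
  funext i
  have h1 : (fun l => (Fin.contractNth j (· * ·) v l).right)
      = Fin.contractNth j (· * ·) (fun l => (v l).right) := by
    funext l
    exact Crystal.comp_contractNth (SemidirectProduct.rightHom (φ := φ)) j v l
  unfold sh
  rw [h1, Fin.partialProd_contractNth, Function.comp_apply]
  rcases lt_trichotomy (i : ℕ) j with h | h | h
  · rw [Fin.contractNth_apply_of_lt _ _ _ _ h, Fin.contractNth_apply_of_lt _ _ _ _ h,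
      Fin.succAbove_of_castSucc_lt _ _ (by simp [Fin.lt_def]; omega)]
  · rw [Fin.contractNth_apply_of_eq _ _ _ _ h, Fin.contractNth_apply_of_eq _ _ _ _ h,
      Fin.succAbove_of_castSucc_lt _ _ (by simp [Fin.lt_def]; omega)]
    rw [SemidirectProduct.mul_left, map_mul, ← MulAut.mul_apply, ← map_mul, mul_assoc,
      ← Fin.succ_castSucc, Fin.partialProd_succ]
  · rw [Fin.contractNth_apply_of_gt _ _ _ _ h, Fin.contractNth_apply_of_gt _ _ _ _ h,
      Fin.succAbove_of_le_castSucc _ _ (by simp [Fin.le_def]; omega), ← Fin.succ_castSucc]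

/-- the representation of the semidirect product on functions on `G` -/
noncomputable def WW (k : Type) [CommRing k] : Rep.{0} k (L ⋊[φ] G) :=
  Rep.of (X := G → k)
    { toFun := fun γ =>
        { toFun := fun w g => w (g * γ.right)
          map_add' := fun _ _ => rfl
          map_smul' := fun _ _ => rfl }
      map_one' := by ext w g; simp
      map_mul' := fun a b => by ext w g; simp [mul_assoc] }

lemma WW_apply (k : Type) [CommRing k] (γ : L ⋊[φ] G) (w : WW φ k) (g : G) :
    ((WW φ k).ρ γ w : G → k) g = (w : G → k) (g * γ.right) := rfl

/-- pull back along the shear -/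
noncomputable def pst (k : Type) [CommRing k] :
    inhomogeneousCochains (Rep.trivial k L k) ⟶ inhomogeneousCochains (WW φ k) where
  f n := ModuleCat.ofHom
    { toFun := fun F v => (fun g => F (sh φ g v) : G → k)
      map_add' := fun x y => rfl
      map_smul' := fun r x => rfl }
  comm' i j hij := by
    have hij' : i + 1 = j := hij
    subst hij'
    rw [inhomogeneousCochains.d_def, inhomogeneousCochains.d_def]
    ext F v
    simp only [ModuleCat.hom_comp, LinearMap.comp_apply]
    refine funext fun g => ?_
    show ((inhomogeneousCochains.d (WW φ k) i).hom
        (fun w => (fun g => F (sh φ g w) : G → k)) v : G → k) g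
      = ((inhomogeneousCochains.d (Rep.trivial k L k) i).hom F) (sh φ g v)
    simp only [inhomogeneousCochains.d_hom_apply]
    refine (Pi.add_apply (M := fun _ => k) _ _ g).trans ?_
    refine congrArg₂ (· + ·) ?_ ?_
    · show F (sh φ (g * (v 0).right) (fun i => v i.succ)) = F fun i => sh φ g v i.succ
      rw [sh_tail]
    · refine (Finset.sum_apply (M := fun _ => k) g _ _).trans ?_
      refine Finset.sum_congr rfl fun j' _ => ?_
      show ((-1:k))^((j':ℕ)+1) • F (sh φ g (Fin.contractNth j' (· * ·) v)) = _
      rw [sh_contract]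

lemma pst_apply (k : Type) [CommRing k] (n : ℕ) (F : (Fin n → L) → k) (v : Fin n → L ⋊[φ] G)
    (g : G) : (((pst φ k).f n).hom F v : G → k) g = F (sh φ g v) := rfl

/-- left translation -/
noncomputable def ltr (k : Type) [CommRing k] (h : G) : WW φ k ⟶ WW φ k :=
  mkHom
    { toFun := fun w => (fun g => (w : G → k) (h⁻¹ * g) : G → k)
      map_add' := fun _ _ => rfl
      map_smul' := fun _ _ => rfl }
    (fun γ w => by
      refine funext fun g => ?_
      show (w : G → k) (h⁻¹ * g * γ.right) = (w : G → k) (h⁻¹ * (g * γ.right))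
      rw [mul_assoc])

lemma ltr_apply (k : Type) [CommRing k] (h : G) (w : WW φ k) (g : G) :
    ((ltr φ k h).hom w : G → k) g = (w : G → k) (h⁻¹ * g) := rfl

lemma pst_equiv (h : G) :
    Crystal.cochainsMap (tr L) (tr L) (φ h⁻¹).toMonoidHom
      ((1 : Representation ℤ G ℤ) h) (fun _ _ => rfl) ≫ pst φ ℤ = pst φ ℤ ≫ cm (ltr φ ℤ h) := by
  apply HomologicalComplex.Hom.ext
  funext n
  ext F v
  refine funext fun g => ?_
  show F (fun i => φ h⁻¹ (sh φ g v i)) = F (sh φ (h⁻¹ * g) v)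
  congr 1
  funext i
  unfold sh
  rw [← MulAut.mul_apply, ← map_mul, mul_assoc]

/-- restriction to the normal subgroup followed by evaluation at 1 -/
noncomputable def rst : inhomogeneousCochains (WW φ ℤ) ⟶ inhomogeneousCochains (tr L) :=
  Crystal.cochainsMap (WW φ ℤ) (tr L) SemidirectProduct.inl
    { toFun := fun w => (w : G → ℤ) 1
      map_add' := fun _ _ => rfl
      map_smul' := fun _ _ => rfl }
    (fun h w => by
      show (w : G → ℤ) (1 * _) = (w : G → ℤ) 1
      simp)

lemma pst_rst : pst φ ℤ ≫ rst φ = 𝟙 _ := by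
  apply HomologicalComplex.Hom.ext
  funext n
  ext F v
  show F (sh φ 1 (fun i => SemidirectProduct.inl (v i))) = F v
  congr 1
  funext i
  unfold sh
  have : (fun l => (SemidirectProduct.inl (φ := φ) (v l)).right) = fun _ => (1:G) := by
    funext l; simp
  rw [this]
  have h1 : Fin.partialProd (fun _ : Fin n => (1:G)) = fun _ => 1 := by
    funext i; simp [Fin.partialProd]
  rw [h1]
  simp

/-- the coinduced module -/
noncomputable def toCnd : WW φ ℤ ⟶ cnd (SemidirectProduct.inl (φ := φ)).range :=
  mkHom
    { toFun := fun w => ⟨fun γ => (w : G → ℤ) γ.right, by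
        rintro ⟨_, ⟨l, rfl⟩⟩ x
        show (w : G → ℤ) (SemidirectProduct.inl l * x).right = (w : G → ℤ) x.right
        simp⟩
      map_add' := fun _ _ => rfl
      map_smul' := fun _ _ => rfl }
    (fun γ w => rfl)

/-- the inverse -/
noncomputable def ofCnd : cnd (SemidirectProduct.inl (φ := φ)).range ⟶ WW φ ℤ :=
  mkHom
    { toFun := fun f => (fun g => f.1 (SemidirectProduct.inr g) : G → ℤ)
      map_add' := fun _ _ => rfl
      map_smul' := fun _ _ => rfl }
    (fun γ f => by
      refine funext fun g => ?_
      show f.1 (SemidirectProduct.inr g * γ) = f.1 (SemidirectProduct.inr (g * γ.right))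
      have h := f.2 ⟨SemidirectProduct.inl (φ g γ.left), ⟨_, rfl⟩⟩
        (SemidirectProduct.inr (g * γ.right))
      refine Eq.trans ?_ h
      refine congrArg f.1 ?_
      ext <;> simp)

lemma to_of : cm (toCnd φ) ≫ cm (ofCnd φ) = 𝟙 _ := by
  apply HomologicalComplex.Hom.ext
  funext n
  ext F v
  rfl

lemma cm_gen {k Γ : Type} [CommRing k] [Group Γ] {A B C : Rep.{0} k Γ} (f : A ⟶ B) (g : B ⟶ C)
    (h : A ⟶ C) (e : ∀ a, g.hom (f.hom a) = h.hom a) :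
    groupCohomology.cochainsMap (MonoidHom.id Γ) f ≫ groupCohomology.cochainsMap (MonoidHom.id Γ) g
      = groupCohomology.cochainsMap (MonoidHom.id Γ) h := by
  apply HomologicalComplex.Hom.ext
  funext n
  refine ModuleCat.hom_ext (LinearMap.ext fun F => funext fun v => ?_)
  exact e _

lemma hm_cm_comp {Γ : Type} [Group Γ] {A B C : Rep ℤ Γ} (f : A ⟶ B) (g : B ⟶ C) (h : A ⟶ C)
    (e : ∀ a, g.hom (f.hom a) = h.hom a) (n : ℕ) (x) :
    hm (cm g) n (hm (cm f) n x) = hm (cm h) n x := by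
  rw [← hm_comp]
  have : cm f ≫ cm g = cm h := by
    exact cm_gen f g h e
  rw [this]

theorem exists_surj (j : ℕ) : ∃ q : groupCohomology (tr L) j →ₗ[ℤ] groupCohomology (WW φ ℤ) j,
    Function.Surjective q := by
  let S := (SemidirectProduct.inl (φ := φ)).range
  let e : L ≃* S := MonoidHom.ofInjective SemidirectProduct.inl_injective
  let c1 := Crystal.cochainsMap (tr L) (tr S) e.symm.toMonoidHom LinearMap.id (fun _ _ => rfl)
  let c2 := Crystal.cochainsMap (tr S) (tr L) e.toMonoidHom LinearMap.id (fun _ _ => rfl)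
  have h12 : c2 ≫ c1 = 𝟙 _ := by
    apply HomologicalComplex.Hom.ext
    funext n
    ext F v
    show F (fun i => e (e.symm (v i))) = F v
    simp
  refine ⟨(hm (cm (ofCnd φ)) j).comp ((coindIso (tr S) j).toLinearEquiv.symm.toLinearMap.comp
    (hm c1 j)), ?_⟩
  refine Function.Surjective.comp (g := hm (cm (ofCnd φ)) j) ?_
    (Function.Surjective.comp (g := (coindIso (tr S) j).toLinearEquiv.symm)
      (LinearEquiv.surjective _) ?_)
  · intro x
    exact ⟨hm (cm (toCnd φ)) j x, by rw [← hm_comp, to_of, hm_id]⟩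
  · intro x
    exact ⟨hm c2 j x, by rw [← hm_comp, h12, hm_id]⟩

theorem pst_bij (j : ℕ) [Module.Finite ℤ (groupCohomology (tr L) j)] :
    Function.Bijective (hm (pst φ ℤ) j) := by
  have hr : ∀ x, hm (rst φ) j (hm (pst φ ℤ) j x) = x := fun x => by
    rw [← hm_comp, pst_rst, hm_id]
  obtain ⟨q, hq⟩ := exists_surj φ j
  have hrs : Function.Surjective (hm (rst φ) j) := fun x => ⟨_, hr x⟩
  have hc : Function.Surjective ((hm (rst φ) j).comp q) := hrs.comp hq
  have hi := IsNoetherian.injective_of_surjective_endomorphism _ hc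
  have hri : Function.Injective (hm (rst φ) j) := by
    intro a b hab
    obtain ⟨a, rfl⟩ := hq a
    obtain ⟨b, rfl⟩ := hq b
    exact congrArg q (hi hab)
  refine ⟨fun a b hab => ?_, fun y => ⟨hm (rst φ) j y, hri (hr _)⟩⟩
  rw [← hr a, hab, hr b]

end shap
end AGPP

open CategoryTheory
namespace AGPP
open groupCohomology

/-- the cyclic group of order four -/
abbrev C4 : Type := Multiplicative (ZMod 4)

/-- elements of the cyclic group -/
def c4 (i : ZMod 4) : C4 := Multiplicative.ofAdd i

lemma sumC4 {M : Type*} [AddCommMonoid M] (f : C4 → M) :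
    ∑ g, f g = f (c4 0) + f (c4 1) + f (c4 2) + f (c4 3) :=
  Fin.sum_univ_four (fun i : Fin 4 => f (c4 i))

lemma forallC4 {P : C4 → Prop} (h0 : P (c4 0)) (h1 : P (c4 1)) (h2 : P (c4 2)) (h3 : P (c4 3)) :
    ∀ g, P g := by
  intro g
  change ZMod 4 at g
  change Fin 4 at g
  fin_cases g
  exacts [h0, h1, h2, h3]

/-- map of cochain complexes induced by a map of coefficients -/
noncomputable abbrev cmg {k Γ : Type} [CommRing k] [Group Γ] {A B : Rep.{0} k Γ} (f : A ⟶ B) :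
    inhomogeneousCochains A ⟶ inhomogeneousCochains B :=
  groupCohomology.cochainsMap (MonoidHom.id Γ) f

section ses
variable {L : Type} [Group L] (φ : C4 →* MulAut L) (k : Type) [CommRing k]

/-- the submodule of sum zero functions -/
def qsub : Submodule k (C4 → k) where
  carrier := {w | ∑ g, w g = 0}
  add_mem' := fun {a b} ha hb => by
    simp only [Set.mem_ofPred_eq, Pi.add_apply, Finset.sum_add_distrib] at *
    rw [ha, hb, add_zero]
  zero_mem' := by simp
  smul_mem' := fun c a ha => by
    simp only [Set.mem_ofPred_eq, Pi.smul_apply, ← Finset.smul_sum] at *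
    rw [ha, smul_zero]

lemma mem_qsub (w : C4 → k) : w ∈ qsub k ↔ ∑ g, w g = 0 := Iff.rfl

lemma sum_shift (w : C4 → k) (h : C4) : ∑ g, w (g * h) = ∑ g, w g :=
  Equiv.sum_comp (Equiv.mulRight h) w

lemma sum_shift' (w : C4 → k) (h : C4) : ∑ g, w (h * g) = ∑ g, w g :=
  Equiv.sum_comp (Equiv.mulLeft h) w

lemma diff_mem (w : C4 → k) : (fun g => w ((c4 1)⁻¹ * g) - w g) ∈ qsub k := by
  rw [mem_qsub, Finset.sum_sub_distrib, sum_shift', sub_self]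

/-- the representation on sum zero functions -/
noncomputable def QQ : Rep.{0} k (L ⋊[φ] C4) :=
  Rep.of (X := qsub k)
    { toFun := fun γ =>
        { toFun := fun w => ⟨fun g => w.1 (g * γ.right), by
            rw [mem_qsub, sum_shift]; exact w.2⟩
          map_add' := fun _ _ => rfl
          map_smul' := fun _ _ => rfl }
      map_one' := by ext w g; simp
      map_mul' := fun a b => by ext w g; simp [mul_assoc] }

/-- constants -/
noncomputable def iW : Rep.trivial k (L ⋊[φ] C4) k ⟶ WW φ k :=
  mkHom
    { toFun := fun a => (fun _ => a : C4 → k)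
      map_add' := fun _ _ => rfl
      map_smul' := fun _ _ => rfl } (fun _ _ => rfl)

/-- sum -/
noncomputable def sW : WW φ k ⟶ Rep.trivial k (L ⋊[φ] C4) k :=
  mkHom
    { toFun := fun w => ∑ g, (w : C4 → k) g
      map_add' := fun a b => Finset.sum_add_distrib
      map_smul' := fun a b => (Finset.smul_sum (r := a) (f := (b : C4 → k))).symm }
    (fun γ w => sum_shift k (w : C4 → k) γ.right)

/-- inclusion -/
noncomputable def kW : QQ φ k ⟶ WW φ k :=
  mkHom
    { toFun := fun w => (w.1 : C4 → k)
      map_add' := fun _ _ => rfl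
      map_smul' := fun _ _ => rfl } (fun _ _ => rfl)

/-- difference -/
noncomputable def pW : WW φ k ⟶ QQ φ k :=
  mkHom
    { toFun := fun w => ⟨fun g => (w : C4 → k) ((c4 1)⁻¹ * g) - (w : C4 → k) g, by
        exact diff_mem k w⟩
      map_add' := fun a b => by
        apply Subtype.ext; funext g
        exact add_sub_add_comm _ _ _ _
      map_smul' := fun r a => by
        apply Subtype.ext; funext g
        exact (smul_sub r _ _).symm }
    (fun γ w => by
        apply Subtype.ext; funext g
        show (w : C4 → k) ((c4 1)⁻¹ * g * γ.right) - (w : C4 → k) (g * γ.right) =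
          (w : C4 → k) ((c4 1)⁻¹ * (g * γ.right)) - (w : C4 → k) (g * γ.right)
        rw [mul_assoc])

lemma iW_inj : ∀ a, (iW φ k).hom a = 0 → a = 0 := fun a ha => congrFun ha 1

lemma kW_inj : ∀ a, (kW φ k).hom a = 0 → a = 0 := fun a ha => Subtype.ext ha

lemma pW_iW : ∀ a, (pW φ k).hom ((iW φ k).hom a) = 0 := fun a => by
  apply Subtype.ext; funext g; exact sub_self a

lemma sW_kW : ∀ a, (sW φ k).hom ((kW φ k).hom a) = 0 := fun a => a.2

lemma ker_sW : ∀ b, (sW φ k).hom b = 0 → ∃ a, (kW φ k).hom a = b := fun b hb => ⟨⟨b, hb⟩, rfl⟩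

lemma sW_surj : ∀ c, ∃ b, (sW φ k).hom b = c := fun c => by
  refine ⟨(Pi.single 1 c : C4 → k), ?_⟩
  show ∑ g, (Pi.single 1 c : C4 → k) g = c
  simp

lemma ker_pW : ∀ b, (pW φ k).hom b = 0 → ∃ a, (iW φ k).hom a = b := fun b hb => by
  have h : ∀ g, (b : C4 → k) ((c4 1)⁻¹ * g) = (b : C4 → k) g := fun g =>
    sub_eq_zero.1 (congrFun (congrArg Subtype.val hb) g)
  have h1 : (b : C4 → k) (c4 0) = (b : C4 → k) (c4 1) := h (c4 1)
  have h2 : (b : C4 → k) (c4 1) = (b : C4 → k) (c4 2) := h (c4 2)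
  have h3 : (b : C4 → k) (c4 2) = (b : C4 → k) (c4 3) := h (c4 3)
  refine ⟨(b : C4 → k) (c4 0), funext ?_⟩
  refine forallC4 rfl h1 (h1.trans h2) (h1.trans (h2.trans h3))

lemma pW_surj : ∀ c, ∃ b, (pW φ k).hom b = c := fun c => by
  let q : C4 → k := c.1
  have hq : q (c4 0) + q (c4 1) + q (c4 2) + q (c4 3) = 0 := by rw [← sumC4]; exact c.2
  let u : C4 → k := fun g => (![0, -q (c4 1), -q (c4 1) - q (c4 2),
    -q (c4 1) - q (c4 2) - q (c4 3)] : Fin 4 → k) (Multiplicative.toAdd g : Fin 4)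
  refine ⟨u, Subtype.ext (funext ?_)⟩
  show ∀ g, u ((c4 1)⁻¹ * g) - u g = q g
  refine forallC4 ?_ ?_ ?_ ?_
  · show (-q (c4 1) - q (c4 2) - q (c4 3)) - 0 = _
    linear_combination -hq
  · show 0 - (-q (c4 1)) = _
    ring
  · show (-q (c4 1)) - (-q (c4 1) - q (c4 2)) = _
    ring
  · show (-q (c4 1) - q (c4 2)) - (-q (c4 1) - q (c4 2) - q (c4 3)) = _
    ring

lemma cm_kp : cmg (pW φ k) ≫
      cmg (kW φ k)
    = cmg (ltr φ k (c4 1)) - 𝟙 _ := by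
  apply HomologicalComplex.Hom.ext
  funext n
  refine ModuleCat.hom_ext (LinearMap.ext fun F => funext fun v => ?_)
  rfl

lemma cm_is : cmg (sW φ k) ≫
      cmg (iW φ k)
    = cmg (ltr φ k (c4 0))
     + cmg (ltr φ k (c4 1))
     + cmg (ltr φ k (c4 2))
     + cmg (ltr φ k (c4 3)) := by
  apply HomologicalComplex.Hom.ext
  funext n
  refine ModuleCat.hom_ext (LinearMap.ext fun F => funext fun v => funext fun g => ?_)
  let w : C4 → k := F v
  show ∑ g, w g = w ((c4 0)⁻¹ * g) + w ((c4 1)⁻¹ * g) + w ((c4 2)⁻¹ * g) + w ((c4 3)⁻¹ * g)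
  rw [← sumC4 (fun h => w (h⁻¹ * g))]
  exact (Equiv.sum_comp ((Equiv.inv C4).trans (Equiv.mulRight g)) w).symm

end ses

section main
variable {L : Type} [Group L] (φ : C4 →* MulAut L)

/-- cohomology with its action -/
noncomputable abbrev VV (j : ℕ) : Rep.{0} ℤ C4 :=
  Crystal.cohRep φ (1 : Representation ℤ C4 ℤ) j

/-- action on cochains -/
noncomputable def act (h : C4) : inhomogeneousCochains (tr L) ⟶ inhomogeneousCochains (tr L) :=
  Crystal.cochainsMap (tr L) (tr L) (φ h⁻¹).toMonoidHom
      ((1 : Representation ℤ C4 ℤ) h) (fun _ _ => rfl)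

lemma VV_rho (j : ℕ) (h : C4) (x : groupCohomology (tr L) j) :
    (VV φ j).ρ h x = hm (act φ h) j x := rfl

/-- generator minus one -/
noncomputable def th (j : ℕ) : groupCohomology (tr L) j →+ groupCohomology (tr L) j :=
  (hm (act φ (c4 1)) j).toAddMonoidHom - AddMonoidHom.id _

/-- norm -/
noncomputable def nu (j : ℕ) : groupCohomology (tr L) j →+ groupCohomology (tr L) j :=
  (hm (act φ (c4 0)) j).toAddMonoidHom + (hm (act φ (c4 1)) j).toAddMonoidHom
  + (hm (act φ (c4 2)) j).toAddMonoidHom + (hm (act φ (c4 3)) j).toAddMonoidHom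

lemma th_apply (j : ℕ) (x) : th φ j x = hm (act φ (c4 1)) j x - x := rfl

lemma nu_apply (j : ℕ) (x) : nu φ j x = hm (act φ (c4 0)) j x + hm (act φ (c4 1)) j x
  + hm (act φ (c4 2)) j x + hm (act φ (c4 3)) j x := rfl

lemma pst_act (h : C4) (j : ℕ) (x) :
    hm (pst φ ℤ) j (hm (act φ h) j x) = hm (cm (ltr φ ℤ h)) j (hm (pst φ ℤ) j x) := by
  rw [← hm_comp, ← hm_comp]
  exact congrArg (fun F => hm F j x) (pst_equiv φ h)

lemma kp_eq (j : ℕ) (x) : hm (cm (kW φ ℤ)) j (hm (cm (pW φ ℤ)) j (hm (pst φ ℤ) j x))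
    = hm (pst φ ℤ) j (th φ j x) := by
  rw [th_apply, map_sub, pst_act, ← hm_comp (cm (pW φ ℤ)), cm_kp, hm_sub, hm_id]

lemma is_eq (j : ℕ) (x) : hm (cm (iW φ ℤ)) j (hm (cm (sW φ ℤ)) j (hm (pst φ ℤ) j x))
    = hm (pst φ ℤ) j (nu φ j x) := by
  rw [nu_apply, map_add, map_add, map_add, pst_act, pst_act, pst_act, pst_act,
    ← hm_comp (cm (sW φ ℤ)), cm_is, hm_add, hm_add, hm_add]

end main
end AGPP

open CategoryTheory
namespace AGPP
open groupCohomology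

lemma cm_comp_zero {k Γ : Type} [CommRing k] [Group Γ] {A B C : Rep.{0} k Γ} (f : A ⟶ B) (g : B ⟶ C)
    (e : ∀ a, g.hom (f.hom a) = 0) : cmg f ≫ cmg g = 0 := by
  apply HomologicalComplex.Hom.ext
  funext n
  refine ModuleCat.hom_ext (LinearMap.ext fun F => funext fun v => ?_)
  exact e _

lemma hm_cm_comp_zero {Γ : Type} [Group Γ] {A B C : Rep ℤ Γ} (f : A ⟶ B) (g : B ⟶ C)
    (e : ∀ a, g.hom (f.hom a) = 0) (n : ℕ) (x) :
    hm (cm g) n (hm (cm f) n x) = 0 := by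
  rw [← hm_comp, cm_comp_zero f g e, hm_zero]

lemma cls_congr {Γ : Type} [Group Γ] (A : Rep ℤ Γ) (n : ℕ) (f f' : (Fin n → Γ) → A)
    (h : dd A n f = 0) (h' : dd A n f' = 0) (e : f = f') : cls A n f h = cls A n f' h' := by
  subst e; rfl

section main
variable {L : Type} [Group L] (φ : C4 →* MulAut L)

/-- sum of translates -/
def sumc {n : ℕ} (c : (Fin n → L) → ℤ) : (Fin n → L) → ℤ := fun v =>
  ∑ h : C4, c (fun i => φ h⁻¹ (v i))

lemma sh_mul {n : ℕ} (h g : C4) (v : Fin n → L ⋊[φ] C4) :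
    (fun i => φ h (sh φ g v i)) = sh φ (h * g) v := by
  funext i
  unfold sh
  rw [← MulAut.mul_apply, ← map_mul, mul_assoc]

theorem main_count (hfg : ∀ j, Module.Finite ℤ (groupCohomology (tr L) j))
    (hf : ∀ j, (nu φ j).range.relIndex (th φ j).ker ≠ 0)
    (hf' : ∀ j, (th φ j).range.relIndex (nu φ j).ker ≠ 0)
    (ht : Finite (tors (groupCohomology (tr L) 4)))
    (c0 : (Fin 3 → L) → ℤ) (h0 : dd (tr L) 3 c0 = 0)
    (c1 : (Fin 2 → L) → ℤ)
    (h1 : ∀ v, dd (tr L) 2 c1 v = c0 (fun i => φ (c4 1)⁻¹ (v i)) - c0 v)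
    (hne : ∀ he : dd (tr L) 2 (sumc φ c1) = 0, ∀ x, nu φ 2 x ≠ cls (tr L) 2 (sumc φ c1) he) :
    Finite (tors (groupCohomology (tr (L ⋊[φ] C4)) 4)) ∧
    Nat.card (tors (groupCohomology (tr (L ⋊[φ] C4)) 4)) <
      Nat.card (tors (groupCohomology (tr L) 4) ⊓ (th φ 4).ker :
          AddSubgroup (groupCohomology (tr L) 4)) *
        ((th φ 3).range.relIndex (nu φ 3).ker *
        ((nu φ 2).range.relIndex (th φ 2).ker * ((th φ 1).range.relIndex (nu φ 1).ker *
          (nu φ 0).range.relIndex (th φ 0).ker))) := by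
  obtain ⟨D, d1, d2, d3, d4, d5⟩ := les (iW φ ℤ) (pW φ ℤ) (iW_inj φ ℤ) (pW_surj φ ℤ) (pW_iW φ ℤ)
    (ker_pW φ ℤ)
  obtain ⟨E, e1, e2, e3, e4, e5⟩ := les (kW φ ℤ) (sW φ ℤ) (kW_inj φ ℤ) (sW_surj φ ℤ) (sW_kW φ ℤ)
    (ker_sW φ ℤ)
  let P : ∀ j, groupCohomology (tr L) j ≃+ groupCohomology (WW φ ℤ) j := fun j =>
    AddEquiv.ofBijective (hm (pst φ ℤ) j).toAddMonoidHom
      (by have := hfg j; exact pst_bij φ j)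
  have hP : ∀ j x, P j x = hm (pst φ ℤ) j x := fun j x => rfl
  let i' : ∀ j, groupCohomology (tr (L ⋊[φ] C4)) j →+ groupCohomology (tr L) j := fun j =>
    (P j).symm.toAddMonoidHom.comp (hm (cm (iW φ ℤ)) j).toAddMonoidHom
  let κ' : ∀ j, groupCohomology (QQ φ ℤ) j →+ groupCohomology (tr L) j := fun j =>
    (P j).symm.toAddMonoidHom.comp (hm (cm (kW φ ℤ)) j).toAddMonoidHom
  let s' : ∀ j, groupCohomology (tr L) j →+ groupCohomology (tr (L ⋊[φ] C4)) j := fun j =>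
    (hm (cm (sW φ ℤ)) j).toAddMonoidHom.comp (P j).toAddMonoidHom
  let p' : ∀ j, groupCohomology (tr L) j →+ groupCohomology (QQ φ ℤ) j := fun j =>
    (hm (cm (pW φ ℤ)) j).toAddMonoidHom.comp (P j).toAddMonoidHom
  have hi' : ∀ j x, i' j x = (P j).symm (hm (cm (iW φ ℤ)) j x) := fun j x => rfl
  have hκ' : ∀ j x, κ' j x = (P j).symm (hm (cm (kW φ ℤ)) j x) := fun j x => rfl
  have hs' : ∀ j x, s' j x = hm (cm (sW φ ℤ)) j (P j x) := fun j x => rfl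
  have hp' : ∀ j x, p' j x = hm (cm (pW φ ℤ)) j (P j x) := fun j x => rfl
  have his : ∀ j x, i' j (s' j x) = nu φ j x := fun j x => by
    rw [hi', hs', AddEquiv.symm_apply_eq, hP, hP, is_eq]
  have hκp : ∀ j x, κ' j (p' j x) = th φ j x := fun j x => by
    rw [hκ', hp', AddEquiv.symm_apply_eq, hP, hP, kp_eq]
  have hθi : ∀ j x, th φ j (i' j x) = 0 := fun j x => by
    rw [← hκp, hp', hi', AddEquiv.apply_symm_apply, hm_cm_comp_zero _ _ (pW_iW φ ℤ), map_zero]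
  have hνκ : ∀ j x, nu φ j (κ' j x) = 0 := fun j x => by
    rw [← his, hs', hκ', AddEquiv.apply_symm_apply, hm_cm_comp_zero _ _ (sW_kW φ ℤ), map_zero]
  have zi : ∀ j x, i' j x = 0 → hm (cm (iW φ ℤ)) j x = 0 := fun j x hx => by
    rw [hi', AddEquiv.symm_apply_eq, map_zero] at hx; exact hx
  have zκ : ∀ j x, κ' j x = 0 → hm (cm (kW φ ℤ)) j x = 0 := fun j x hx => by
    rw [hκ', AddEquiv.symm_apply_eq, map_zero] at hx; exact hx
  -- cochains
  let Pc1 : (Fin 2 → L ⋊[φ] C4) → WW φ ℤ := ((pst φ ℤ).f 2).hom c1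
  let Pc0 : (Fin 3 → L ⋊[φ] C4) → WW φ ℤ := ((pst φ ℤ).f 3).hom c0
  let Y : (Fin 2 → L ⋊[φ] C4) → tr (L ⋊[φ] C4) := ((cm (sW φ ℤ)).f 2).hom Pc1
  let X : (Fin 3 → L ⋊[φ] C4) → QQ φ ℤ := ((cm (pW φ ℤ)).f 3).hom Pc0
  have hPc0 : dd (WW φ ℤ) 3 Pc0 = 0 := by
    rw [hm_comm, h0, map_zero]
  have hX : dd (QQ φ ℤ) 3 X = 0 := by
    rw [hm_comm, hPc0, map_zero]
  have hdP : ∀ v, (kW φ ℤ).hom (X v) = dd (WW φ ℤ) 2 Pc1 v := by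
    intro v
    have e0 : dd (WW φ ℤ) 2 Pc1 v = ((pst φ ℤ).f 3).hom (dd (tr L) 2 c1) v := by
      rw [hm_comm]
    rw [e0]
    refine funext fun g => ?_
    refine Eq.trans ?_ (h1 (sh φ g v)).symm
    rw [sh_mul]
    rfl
  have hY : dd (tr (L ⋊[φ] C4)) 2 Y = 0 := by
    rw [hm_comm]
    funext v
    show (sW φ ℤ).hom (dd (WW φ ℤ) 2 Pc1 v) = 0
    rw [← hdP]
    exact sW_kW φ ℤ _
  have hiY : ((cm (iW φ ℤ)).f 2).hom Y = ((pst φ ℤ).f 2).hom (sumc φ c1) := by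
    funext v
    refine funext fun g => ?_
    show ∑ h : C4, c1 (sh φ h v) = ∑ h : C4, c1 (fun i => φ h⁻¹ (sh φ g v i))
    simp only [sh_mul]
    exact (Equiv.sum_comp ((Equiv.inv C4).trans (Equiv.mulRight g)) (fun h => c1 (sh φ h v))).symm
  have hpe : dd (WW φ ℤ) 2 (((pst φ ℤ).f 2).hom (sumc φ c1)) = 0 := by
    rw [← hiY, hm_comm, hY, map_zero]
  have he : dd (tr L) 2 (sumc φ c1) = 0 := by
    have h2 := hpe
    rw [hm_comm] at h2
    have h3 := congrArg ((rst φ).f 3).hom h2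
    rw [map_zero] at h3
    refine Eq.trans ?_ h3
    have h4 := congr($(pst_rst φ).f 3 (dd (tr L) 2 (sumc φ c1)))
    exact h4.symm
  refine counting (th φ 0) (nu φ 0) (th φ 1) (nu φ 1) (th φ 2) (nu φ 2) (th φ 3) (nu φ 3) (th φ 4)
    (i' 0) (i' 2) (i' 4) (s' 0) (s' 2) (p' 1) (p' 3) (κ' 1) (κ' 3)
    (D 1).toAddMonoidHom (D 3).toAddMonoidHom (E 0).toAddMonoidHom (E 2).toAddMonoidHom
    (his 0) (his 2) (hκp 1) (hκp 3) (hθi 0) (hθi 2) (hθi 4) (hνκ 1) (hνκ 3)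
    (fun x hx => hm_cm_zero _ (iW_inj φ ℤ) x (zi 0 x hx))
    (fun x hx => e1 0 x (zκ 1 x hx))
    (fun y => by rw [hκ', AddEquiv.symm_apply_eq, map_zero]; exact e2 0 y)
    (fun x => e4 0 _)
    (fun x hx => d1 1 x (zi 2 x hx))
    (fun y => by rw [hi', AddEquiv.symm_apply_eq, map_zero]; exact d2 1 y)
    (fun x => d4 1 _)
    (fun x hx => e1 2 x (zκ 3 x hx))
    (fun y => by rw [hκ', AddEquiv.symm_apply_eq, map_zero]; exact e2 2 y)
    (fun x => e4 2 _)
    (fun x hx => d1 3 x (zi 4 x hx))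
    (fun x => d4 3 _)
    (cls (tr (L ⋊[φ] C4)) 2 Y hY) ?_ ⟨cls (tr L) 3 c0 h0, ?_⟩
    (hf 0) (hf' 1) (hf 2) (hf' 3)
  · intro x hx
    refine hne he x ?_
    rw [← his, hx, hi', AddEquiv.symm_apply_eq, hP]
    rw [hm_cls (cm (iW φ ℤ)) 2 Y hY (by rw [hm_comm, hY, map_zero]),
      hm_cls (pst φ ℤ) 2 (sumc φ c1) he hpe]
    exact cls_congr _ _ _ _ _ _ hiY
  · rw [hp', hP, hm_cls (pst φ ℤ) 3 c0 h0 hPc0, hm_cls (cm (pW φ ℤ)) 3 Pc0 hPc0 hX]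
    exact (e5 2 Y hY Pc1 X hX (fun v => rfl) hdP).symm

end main
end AGPP

open CategoryTheory
namespace AGPP
open groupCohomology

lemma c4_gen : ∀ x : C4, x ∈ Subgroup.zpowers (c4 1) := by
  refine forallC4 ⟨0, ?_⟩ ⟨1, ?_⟩ ⟨2, ?_⟩ ⟨3, ?_⟩ <;> rfl

section gen
variable {k : Type} [CommRing k] (A : Rep.{0} k C4)

/-- generator minus one -/
noncomputable def thA : A →+ A := (A.ρ (c4 1) - 1).toAddMonoidHom

/-- norm -/
noncomputable def nuA : A →+ A := A.ρ.norm.toAddMonoidHom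

lemma thA_apply (x : A) : thA A x = A.ρ (c4 1) x - x := rfl

lemma nuA_apply (x : A) : nuA A x = A.ρ (c4 0) x + A.ρ (c4 1) x + A.ρ (c4 2) x + A.ρ (c4 3) x := by
  refine Eq.trans ?_ (sumC4 (fun g => A.ρ g x))
  show (∑ g, A.ρ g) x = _
  rw [LinearMap.sum_apply]

lemma rho_mul (g h : C4) (x : A) : A.ρ (g * h) x = A.ρ g (A.ρ h x) := by
  rw [map_mul]; rfl

lemma rho_one (x : A) : A.ρ (c4 0) x = x := by
  rw [show c4 0 = 1 from rfl, map_one]; rfl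

lemma cyc_even (i : ℕ) [NeZero i] (hi : Even i) :
    ∃ π : (thA A).ker →+ groupCohomology A i, ∀ x, π x = 0 ↔ x.1 ∈ (nuA A).range :=
  ⟨(Rep.FiniteCyclicGroup.groupCohomologyπEven A (c4 1) c4_gen i hi).hom.toAddMonoidHom,
   fun x => Rep.FiniteCyclicGroup.groupCohomologyπEven_eq_zero_iff A (c4 1) c4_gen i hi x⟩

lemma cyc_odd (i : ℕ) (hi : Odd i) :
    ∃ π : (nuA A).ker →+ groupCohomology A i, ∀ x, π x = 0 ↔ x.1 ∈ (thA A).range :=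
  ⟨(Rep.FiniteCyclicGroup.groupCohomologyπOdd A (c4 1) c4_gen i hi).hom.toAddMonoidHom,
   fun x => Rep.FiniteCyclicGroup.groupCohomologyπOdd_eq_zero_iff A (c4 1) c4_gen i hi x⟩

lemma cyc_zero : ∃ π : (thA A).ker →+ groupCohomology A 0, Function.Injective π :=
  ⟨(Rep.FiniteCyclicGroup.groupCohomologyIso₀ A (c4 1)
      c4_gen).toLinearEquiv.symm.toLinearMap.toAddMonoidHom,
    LinearEquiv.injective _⟩

end gen

lemma finite_relIndex {V : Type} [AddCommGroup V] [Module.Finite ℤ V] (R K : AddSubgroup V)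
    (h : ∀ x ∈ K, (4:ℤ) • x ∈ R) : R.relIndex K ≠ 0 := by
  have h1 : Module.Finite ℤ K := by
    have : Module.Finite ℤ (AddSubgroup.toIntSubmodule K) := inferInstance
    exact this
  have h2 : Module.Finite ℤ (K ⧸ R.addSubgroupOf K) :=
    Module.Finite.of_surjective (QuotientAddGroup.mk' (R.addSubgroupOf K)).toIntLinearMap
      (QuotientAddGroup.mk'_surjective _)
  have : Finite (K ⧸ R.addSubgroupOf K) := by
    refine Module.finite_of_fg_torsion _ ?_
    intro x
    refine ⟨⟨4, by simp⟩, ?_⟩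
    induction x using QuotientAddGroup.induction_on with
    | H x =>
      show (4:ℤ) • (x : K ⧸ R.addSubgroupOf K) = 0
      rw [← QuotientAddGroup.mk_zsmul, QuotientAddGroup.eq_zero_iff]
      exact h x.1 x.2
  exact (AddSubgroup.index_ne_zero_iff_finite).2 this

lemma finite_tors {V : Type} [AddCommGroup V] [Module.Finite ℤ V] : Finite (tors V) := by
  have h1 : Module.Finite ℤ (tors V) := by
    have : Module.Finite ℤ (AddSubgroup.toIntSubmodule (tors V)) := inferInstance
    exact this
  refine Module.finite_of_fg_torsion _ ?_
  intro x
  obtain ⟨n, hn, hx⟩ := isOfFinAddOrder_iff_nsmul_eq_zero.1 x.2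
  refine ⟨⟨(n:ℤ), by simpa using hn.ne'⟩, ?_⟩
  apply Subtype.ext
  show (n:ℤ) • x.1 = 0
  simpa using hx

section main
variable {L : Type} [Group L] (φ : C4 →* MulAut L)

lemma th_ker (j : ℕ) (x) : x ∈ (th φ j).ker ↔ hm (act φ (c4 1)) j x = x := by
  rw [AddMonoidHom.mem_ker, th_apply, sub_eq_zero]

lemma act_mul (g h : C4) (j : ℕ) (x) : hm (act φ (g * h)) j x = hm (act φ g) j (hm (act φ h) j x) := by
  exact rho_mul (VV φ j) g h x

lemma act_one (j : ℕ) (x) : hm (act φ (c4 0)) j x = x := by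
  exact rho_one (VV φ j) x

lemma nu_eq (j : ℕ) : nu φ j = nuA (VV φ j) := by
  ext x
  exact (nuA_apply (VV φ j) x).symm

lemma th_eq (j : ℕ) : th φ j = thA (VV φ j) := rfl

lemma ker_th_four (j : ℕ) (x) (hx : x ∈ (th φ j).ker) : (4:ℤ) • x ∈ (nu φ j).range := by
  rw [th_ker] at hx
  refine ⟨x, ?_⟩
  have h2 : hm (act φ (c4 2)) j x = x := by
    rw [show c4 2 = c4 1 * c4 1 from rfl, act_mul, hx, hx]
  have h3 : hm (act φ (c4 3)) j x = x := by
    rw [show c4 3 = c4 1 * c4 2 from rfl, act_mul, h2, hx]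
  rw [nu_apply, act_one, hx, h2, h3]
  abel

lemma ker_nu_four (j : ℕ) (x) (hx : x ∈ (nu φ j).ker) : (4:ℤ) • x ∈ (th φ j).range := by
  rw [AddMonoidHom.mem_ker, nu_apply, act_one] at hx
  have h2 := act_mul φ (c4 1) (c4 1) j x
  have h3 := act_mul φ (c4 1) (c4 2) j x
  rw [show c4 1 * c4 1 = c4 2 from rfl] at h2
  rw [show c4 1 * c4 2 = c4 3 from rfl] at h3
  -- 4 - (1+t+t^2+t^3) = -(t-1)(3 + 2t + t^2)
  refine ⟨-((3:ℤ) • x + (2:ℤ) • hm (act φ (c4 1)) j x + hm (act φ (c4 2)) j x), ?_⟩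
  rw [th_apply]
  simp only [map_neg, map_add, map_zsmul]
  rw [← h2, ← h3]
  have : (4:ℤ) • x = (4:ℤ) • x - (x + hm (act φ (c4 1)) j x + hm (act φ (c4 2)) j x + hm (act φ (c4 3)) j x) := by
    rw [hx, sub_zero]
  rw [this]
  abel

lemma mfin {V : Type} [AddCommGroup V] (inst : Module ℤ V) (h : @Module.Finite ℤ V _ _ inst) :
    @Module.Finite ℤ V _ _ (AddCommGroup.toIntModule V) := by
  obtain rfl : inst = AddCommGroup.toIntModule V := Subsingleton.elim _ _
  exact h

lemma mem_tors {V : Type*} [AddCommGroup V] (x : V) (h : (4:ℤ) • x = 0) : x ∈ tors V := by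
  refine isOfFinAddOrder_iff_nsmul_eq_zero.2 ⟨4, by norm_num, ?_⟩
  rw [← h]; exact (natCast_zsmul x 4).symm

lemma sub_of_pi {V H : Type} [AddCommGroup V] [AddCommGroup H] (K R : AddSubgroup V)
    (h4 : ∀ x ∈ K, (4:ℤ) • x ∈ R)
    (π : K →+ H) (hπ : ∀ x, π x = 0 ↔ x.1 ∈ R) :
    ∃ S : AddSubgroup H, S ≤ tors H ∧ Nat.card S = R.relIndex K := by
  refine ⟨π.range, ?_, ?_⟩
  · rintro _ ⟨x, rfl⟩
    apply mem_tors
    rw [← map_zsmul, hπ]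
    exact h4 x.1 x.2
  · have : π.ker = R.addSubgroupOf K := by
      ext x; exact hπ x
    rw [← AddSubgroup.index_ker, this]
    rfl

/-- the sizes of the pieces -/
noncomputable def siz (j : ℕ) : ℕ :=
  if j = 4 then Nat.card (tors (groupCohomology (tr L) 4) ⊓ (th φ 4).ker :
          AddSubgroup (groupCohomology (tr L) 4))
  else if Even j then (nu φ j).range.relIndex (th φ j).ker
  else (th φ j).range.relIndex (nu φ j).ker

lemma exists_sub (i j : ℕ) (h : i + j = 4) : ∃ S : AddSubgroup (groupCohomology (VV φ j) i),
    S ≤ tors (groupCohomology (VV φ j) i) ∧ Nat.card S = siz φ j := by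
  by_cases hj : j = 4
  · obtain rfl : i = 0 := by omega
    subst hj
    obtain ⟨π, hπ⟩ := cyc_zero (VV φ 4)
    let M : AddSubgroup (groupCohomology (tr L) 4) := tors (groupCohomology (tr L) 4) ⊓ (th φ 4).ker
    let f : M →+ groupCohomology (VV φ 4) 0 := π.comp (AddSubgroup.inclusion inf_le_right)
    have hf : Function.Injective f := hπ.comp (AddSubgroup.inclusion_injective _)
    refine ⟨f.range, ?_, ?_⟩
    · rintro _ ⟨x, rfl⟩
      have h1 : IsOfFinAddOrder x.1 := x.2.1
      have h2 : IsOfFinAddOrder x := by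
        obtain ⟨n, hn, hx⟩ := isOfFinAddOrder_iff_nsmul_eq_zero.1 h1
        exact isOfFinAddOrder_iff_nsmul_eq_zero.2 ⟨n, hn, Subtype.ext hx⟩
      exact f.isOfFinAddOrder h2
    · rw [siz, if_pos rfl]
      exact (Nat.card_congr (AddMonoidHom.ofInjective hf).toEquiv).symm
  · by_cases he : Even j
    · have : NeZero i := ⟨by omega⟩
      have hi : Even i := by
        have : i = 4 - j := by omega
        obtain ⟨r, rfl⟩ := he
        exact ⟨2 - r, by omega⟩
      obtain ⟨π, hπ⟩ := cyc_even (VV φ j) i hi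
      rw [siz, if_neg hj, if_pos he]
      refine sub_of_pi (th φ j).ker (nu φ j).range (ker_th_four φ j) π ?_
      rw [nu_eq]; exact hπ
    · have hi : Odd i := by
        rw [Nat.not_even_iff_odd] at he
        obtain ⟨r, rfl⟩ := he
        exact ⟨1 - r, by omega⟩
      obtain ⟨π, hπ⟩ := cyc_odd (VV φ j) i hi
      rw [siz, if_neg hj, if_neg he]
      have h4 := ker_nu_four φ j
      rw [nu_eq] at *
      exact sub_of_pi (nuA (VV φ j)).ker (th φ j).range h4 π hπ

/-- indexing of the summands -/
def idx : Fin 5 ≃ {p : ℕ × ℕ // p.1 + p.2 = 4} where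
  toFun j := ⟨(4 - j, j), by show 4 - (j:ℕ) + j = 4; omega⟩
  invFun p := ⟨p.1.2, by have := p.2; omega⟩
  left_inv j := rfl
  right_inv p := by
    obtain ⟨⟨i, j⟩, h⟩ := p
    apply Subtype.ext
    simp only [Prod.mk.injEq, and_true] at h ⊢
    omega

lemma lower [Finite (tors ((p : {p : ℕ × ℕ // p.1 + p.2 = 4}) → groupCohomology (VV φ p.1.2) p.1.1))] :
    siz φ 4 * (siz φ 3 * (siz φ 2 * (siz φ 1 * siz φ 0))) ≤
    Nat.card (tors ((p : {p : ℕ × ℕ // p.1 + p.2 = 4}) → groupCohomology (VV φ p.1.2) p.1.1)) := by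
  have h := fun p : {p : ℕ × ℕ // p.1 + p.2 = 4} => exists_sub φ p.1.1 p.1.2 p.2
  choose S hS hc using h
  let _ : Fintype {p : ℕ × ℕ // p.1 + p.2 = 4} := Fintype.ofEquiv _ idx
  have h1 : Nat.card (∀ p, S p) = siz φ 4 * (siz φ 3 * (siz φ 2 * (siz φ 1 * siz φ 0))) := by
    rw [Nat.card_pi]
    simp only [hc]
    rw [← Equiv.prod_comp idx, Fin.prod_univ_five]
    show siz φ 0 * siz φ 1 * siz φ 2 * siz φ 3 * siz φ 4 = _
    ring
  rw [← h1]
  refine Nat.card_le_card_of_injective (fun x => ⟨fun p => (x p).1, ?_⟩) ?_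
  · have h2 : ∀ p, ∃ n : ℕ, 0 < n ∧ n • (x p).1 = 0 := fun p =>
      isOfFinAddOrder_iff_nsmul_eq_zero.1 (hS p (x p).2)
    choose n hn hx using h2
    refine isOfFinAddOrder_iff_nsmul_eq_zero.2 ⟨∏ p, n p, Finset.prod_pos fun p _ => hn p, ?_⟩
    funext p
    obtain ⟨m, hm⟩ := Finset.dvd_prod_of_mem n (Finset.mem_univ p)
    show (∏ p, n p) • (x p).1 = 0
    rw [hm, mul_comm, mul_smul, hx, smul_zero]
  · intro x y hxy
    funext p
    exact Subtype.ext (congrFun (congrArg Subtype.val hxy) p)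

lemma card_tors {A B : Type*} [AddCommGroup A] [AddCommGroup B] (e : A ≃+ B) :
    Nonempty (tors A ≃ tors B) := by
  refine ⟨e.toEquiv.subtypeEquiv fun a => ?_⟩
  exact (Function.Injective.isOfFinAddOrder_iff (f := (e : A →+ B)) e.injective).symm

theorem not_iso (hfg : ∀ j, Module.Finite ℤ (groupCohomology (tr L) j))
    (c0 : (Fin 3 → L) → ℤ) (h0 : dd (tr L) 3 c0 = 0)
    (c1 : (Fin 2 → L) → ℤ)
    (h1 : ∀ v, dd (tr L) 2 c1 v = c0 (fun i => φ (c4 1)⁻¹ (v i)) - c0 v)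
    (hne : ∀ he : dd (tr L) 2 (sumc φ c1) = 0, ∀ x, nu φ 2 x ≠ cls (tr L) 2 (sumc φ c1) he) :
    ¬ Nonempty (groupCohomology (tr (L ⋊[φ] C4)) 4 ≃+
      ((p : {p : ℕ × ℕ // p.1 + p.2 = 4}) → groupCohomology (VV φ p.1.2) p.1.1)) := by
  rintro ⟨e⟩
  obtain ⟨t⟩ := card_tors e
  have m := main_count φ hfg
    (fun j => by have := mfin _ (hfg j); exact finite_relIndex _ _ (ker_th_four φ j))
    (fun j => by have := mfin _ (hfg j); exact finite_relIndex _ _ (ker_nu_four φ j))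
    (by have := mfin _ (hfg 4); exact finite_tors) c0 h0 c1 h1 hne
  have := m.1
  have hfin := Finite.of_equiv _ t
  have l := lower φ
  have m2 := m.2
  rw [Nat.card_congr t] at m2
  refine absurd l (not_le.2 (lt_of_lt_of_eq m2 ?_))
  simp only [siz]
  norm_num

end main
end AGPP

open CategoryTheory
namespace AGPP
open groupCohomology

section low
variable {L : Type} [Group L]

lemma dd_one_gen {k : Type} [CommRing k] (g : (Fin 1 → L) → k) (v : Fin 2 → L) :
    (inhomogeneousCochains.d (Rep.trivial k L k) 1).hom g v
      = g (fun _ => v 1) - g (fun _ => v 0 * v 1) + g (fun _ => v 0) := by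
  rw [inhomogeneousCochains.d_hom_apply, Fin.sum_univ_two]
  have e0 : (fun i : Fin 1 => v i.succ) = fun _ => v 1 := by
    funext i; fin_cases i; rfl
  have e1 : (Fin.contractNth (0 : Fin 2) (· * ·) v) = fun _ => v 0 * v 1 := by
    funext i; fin_cases i; rfl
  have e2 : (Fin.contractNth (1 : Fin 2) (· * ·) v) = fun _ => v 0 := by
    funext i; fin_cases i; rfl
  rw [e0, e1, e2]
  simp
  ring

lemma dd_one (g : (Fin 1 → L) → ℤ) (v : Fin 2 → L) :
    dd (tr L) 1 g v = g (fun _ => v 1) - g (fun _ => v 0 * v 1) + g (fun _ => v 0) :=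
  dd_one_gen g v

lemma dd_two_gen {k : Type} [CommRing k] (g : (Fin 2 → L) → k) (v : Fin 3 → L) :
    (inhomogeneousCochains.d (Rep.trivial k L k) 2).hom g v
      = g ![v 1, v 2] - g ![v 0 * v 1, v 2] + g ![v 0, v 1 * v 2] - g ![v 0, v 1] := by
  rw [inhomogeneousCochains.d_hom_apply, Fin.sum_univ_three]
  have e0 : (fun i : Fin 2 => v i.succ) = ![v 1, v 2] := by
    funext i; fin_cases i <;> rfl
  have e1 : (Fin.contractNth (0 : Fin 3) (· * ·) v) = ![v 0 * v 1, v 2] := by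
    funext i; fin_cases i <;> rfl
  have e2 : (Fin.contractNth (1 : Fin 3) (· * ·) v) = ![v 0, v 1 * v 2] := by
    funext i; fin_cases i <;> rfl
  have e3 : (Fin.contractNth (2 : Fin 3) (· * ·) v) = ![v 0, v 1] := by
    funext i; fin_cases i <;> rfl
  rw [e0, e1, e2, e3]
  simp
  ring

lemma dd_two (g : (Fin 2 → L) → ℤ) (v : Fin 3 → L) :
    dd (tr L) 2 g v
      = g ![v 1, v 2] - g ![v 0 * v 1, v 2] + g ![v 0, v 1 * v 2] - g ![v 0, v 1] :=
  dd_two_gen g v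

lemma dd_three_gen {k : Type} [CommRing k] (g : (Fin 3 → L) → k) (v : Fin 4 → L) :
    (inhomogeneousCochains.d (Rep.trivial k L k) 3).hom g v
      = g ![v 1, v 2, v 3] - g ![v 0 * v 1, v 2, v 3] + g ![v 0, v 1 * v 2, v 3]
        - g ![v 0, v 1, v 2 * v 3] + g ![v 0, v 1, v 2] := by
  rw [inhomogeneousCochains.d_hom_apply, Fin.sum_univ_four]
  have e0 : (fun i : Fin 3 => v i.succ) = ![v 1, v 2, v 3] := by
    funext i; fin_cases i <;> rfl
  have e1 : (Fin.contractNth (0 : Fin 4) (· * ·) v) = ![v 0 * v 1, v 2, v 3] := by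
    funext i; fin_cases i <;> rfl
  have e2 : (Fin.contractNth (1 : Fin 4) (· * ·) v) = ![v 0, v 1 * v 2, v 3] := by
    funext i; fin_cases i <;> rfl
  have e3 : (Fin.contractNth (2 : Fin 4) (· * ·) v) = ![v 0, v 1, v 2 * v 3] := by
    funext i; fin_cases i <;> rfl
  have e4 : (Fin.contractNth (3 : Fin 4) (· * ·) v) = ![v 0, v 1, v 2] := by
    funext i; fin_cases i <;> rfl
  rw [e0, e1, e2, e3, e4]
  simp [pow_succ]
  ring

lemma dd_three (g : (Fin 3 → L) → ℤ) (v : Fin 4 → L) :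
    dd (tr L) 3 g v
      = g ![v 1, v 2, v 3] - g ![v 0 * v 1, v 2, v 3] + g ![v 0, v 1 * v 2, v 3]
        - g ![v 0, v 1, v 2 * v 3] + g ![v 0, v 1, v 2] :=
  dd_three_gen g v

lemma cls_add_gen {k : Type} [CommRing k] (A : Rep.{0} k L) (n : ℕ) (f g : (Fin n → L) → A)
    (hf : (inhomogeneousCochains.d A n).hom f = 0) (hg : (inhomogeneousCochains.d A n).hom g = 0)
    (hfg : (inhomogeneousCochains.d A n).hom (f + g) = 0) :
    π A n (cocyclesMk (f + g) hfg) = π A n (cocyclesMk f hf) + π A n (cocyclesMk g hg) := by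
  rw [← map_add]
  congr 1
  apply (ModuleCat.mono_iff_injective (iCocycles A n)).1 inferInstance
  rw [map_add, iCocycles_mk _ hfg, iCocycles_mk _ hf, iCocycles_mk _ hg]

lemma cls_add (n : ℕ) (f g : (Fin n → L) → ℤ) (hf : dd (tr L) n f = 0) (hg : dd (tr L) n g = 0)
    (hfg : dd (tr L) n (f + g) = 0) :
    cls (tr L) n (f + g) hfg = cls (tr L) n f hf + cls (tr L) n g hg :=
  cls_add_gen (tr L) n f g hf hg hfg

/-- if two cocycles have equal classes then the difference is a coboundary -/
lemma cls_eq (n : ℕ) (f g : (Fin (n+1) → L) → ℤ) (hf : dd (tr L) (n+1) f = 0)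
    (hg : dd (tr L) (n+1) g = 0)
    (h : cls (tr L) (n+1) f hf = cls (tr L) (n+1) g hg) :
    ∃ b : (Fin n → L) → ℤ, dd (tr L) n b + g = f := by
  have hs : dd (tr L) (n+1) (f - g) = 0 :=
    ((dd (tr L) (n+1)).map_sub f g).trans (by rw [hf, hg, sub_zero])
  have h2 := cls_add (n+1) (f - g) g hs hg
    (((dd (tr L) (n+1)).map_add (f - g) g).trans (by rw [hs, hg, add_zero]))
  have h3 : cls (tr L) (n+1) (f - g) hs = 0 := by
    rw [← add_eq_right (b := cls (tr L) (n+1) g hg), ← h2, ← h]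
    exact cls_congr _ _ _ _ _ _ (sub_add_cancel f g)
  obtain ⟨b, hb⟩ := (cls_eq_zero (tr L) n _ hs).1 h3
  refine ⟨b, ?_⟩
  rw [hb]
  exact sub_add_cancel f g

end low

section nusum
variable {L : Type} [Group L] (φ : C4 →* MulAut L)

lemma nu_cls (n : ℕ) (f : (Fin n → L) → ℤ) (hf : dd (tr L) n f = 0) :
    ∃ h, nu φ n (cls (tr L) n f hf) = cls (tr L) n (sumc φ f) h := by
  let F : C4 → (Fin n → L) → ℤ := fun h => ((act φ h).f n).hom f
  have hF : ∀ h, dd (tr L) n (F h) = 0 := fun h => by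
    rw [hm_comm, hf, map_zero]
  have e : ∀ h, hm (act φ h) n (cls (tr L) n f hf) = cls (tr L) n (F h) (hF h) := fun h =>
    hm_cls _ _ _ _ _
  have ad : ∀ a b : (Fin n → L) → ℤ, dd (tr L) n a = 0 → dd (tr L) n b = 0 →
      dd (tr L) n (a + b) = 0 := fun a b ha hb =>
    ((dd (tr L) n).map_add a b).trans (by rw [ha, hb, add_zero])
  have h1 := ad _ _ (hF (c4 0)) (hF (c4 1))
  have h2 := ad _ _ h1 (hF (c4 2))
  have h3 := ad _ _ h2 (hF (c4 3))
  have hs : F (c4 0) + F (c4 1) + F (c4 2) + F (c4 3) = sumc φ f := by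
    funext v
    exact (sumC4 (fun h => F h v)).symm
  refine ⟨hs ▸ h3, ?_⟩
  rw [nu_apply, e, e, e, e, ← cls_add n _ _ _ _ h1, ← cls_add n _ _ _ _ h2, ← cls_add n _ _ _ _ h3]
  exact cls_congr _ _ _ _ _ _ hs

end nusum
end AGPP

open CategoryTheory
namespace AGPP
open groupCohomology

/-- the lattice -/
abbrev L6 : Type := Crystal.Lat 6

/-- coordinates -/
def co (x : L6) (i : Fin 6) : ℤ := Multiplicative.toAdd x i

/-- vector from coordinates -/
def ve (w : Fin 6 → ℤ) : L6 := Multiplicative.ofAdd w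

@[simp] lemma co_mul (x y : L6) (i : Fin 6) : co (x * y) i = co x i + co y i := rfl
@[simp] lemma co_ve (w : Fin 6 → ℤ) (i : Fin 6) : co (ve w) i = w i := rfl

lemma L6_ext (x y : L6) (h : ∀ i, co x i = co y i) : x = y := funext h

/-- the generator -/
def fa (x : L6) : L6 := ve ![co x 0 + co x 1, -co x 2, co x 1, co x 3, -co x 5, -co x 3 + co x 4]

/-- its inverse -/
def fb (x : L6) : L6 := ve ![co x 0 - co x 2, co x 2, -co x 1, co x 3, co x 3 + co x 5, -co x 4]

lemma fa_fb (x : L6) : fa (fb x) = x := by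
  apply L6_ext; intro i; fin_cases i <;> simp [fa, fb]

lemma fb_fa (x : L6) : fb (fa x) = x := by
  apply L6_ext; intro i; fin_cases i <;> simp [fa, fb]

lemma fb_eq (x : L6) : fa (fa (fa x)) = fb x := by
  apply L6_ext; intro i; fin_cases i <;> simp [fa, fb] <;> ring

lemma fa_mul (x y : L6) : fa (x * y) = fa x * fa y := by
  apply L6_ext; intro i; fin_cases i <;> simp [fa] <;> ring

lemma fb_mul (x y : L6) : fb (x * y) = fb x * fb y := by
  apply L6_ext; intro i; fin_cases i <;> simp [fb] <;> ring

/-- the generator as an automorphism -/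
def al : MulAut L6 :=
  { toFun := fa, invFun := fb, left_inv := fb_fa, right_inv := fa_fb, map_mul' := fa_mul }

lemma al_pow : al ^ 4 = 1 := by
  ext1 x
  show fa (fa (fa (fa x))) = x
  rw [fb_eq, fb_fa]

/-- the action -/
def ph : C4 →* MulAut L6 := Crystal.zmodHom 4 al al_pow

lemma ph0 (x : L6) : ph (c4 0) x = x := rfl
lemma ph1 (x : L6) : ph (c4 1) x = fb (fb (fb x)) := by
  have h1 : fa x = fb (fb (fb x)) := by
    apply L6_ext; intro i; fin_cases i <;> simp [fa, fb] <;> ring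
  exact h1
lemma ph2 (x : L6) : ph (c4 2) x = fb (fb x) := by
  have h1 : fa (fa x) = fb (fb x) := by
    apply L6_ext; intro i; fin_cases i <;> simp [fa, fb] <;> ring
  exact h1
lemma ph3 (x : L6) : ph (c4 3) x = fb x := by
  rw [← fb_eq]
  rfl

/-- binomial coefficient -/
def tri (a : ℤ) : ℤ := a * (a - 1) / 2

lemma two_tri (a : ℤ) : 2 * tri a = a * (a - 1) := by
  unfold tri
  apply Int.mul_ediv_cancel'
  have := Int.even_mul_pred_self a
  exact this.two_dvd

lemma tri_add (a b : ℤ) : tri (a + b) = tri a + tri b + a * b := by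
  have h1 := two_tri a
  have h2 := two_tri b
  have h3 := two_tri (a + b)
  have : 2 * tri (a + b) = 2 * (tri a + tri b + a * b) := by
    rw [h3]; linear_combination -h1 - h2
  omega

/-- the three-cocycle -/
def k0 (x y z : L6) : ℤ := co x 0 * co y 1 * co z 3
  + (- co x 0 * co y 1 - co x 0 * co y 2 - co x 1 * co y 2) * co z 4
  + (co x 0 * co y 1 - co x 0 * co y 2) * co z 5

/-- the two-cochain -/
def k1 (x y : L6) : ℤ := -((co x 1 * co x 2 + tri (co x 2)) * co y 4 + tri (co x 2) * co y 5)

/-- as cochains -/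
def kc0 : (Fin 3 → L6) → ℤ := fun v => k0 (v 0) (v 1) (v 2)
/-- as cochains -/
def kc1 : (Fin 2 → L6) → ℤ := fun v => k1 (v 0) (v 1)

lemma kc0_cocycle : dd (tr L6) 3 kc0 = 0 := by
  funext v
  rw [dd_three]
  show k0 (v 1) (v 2) (v 3) - k0 (v 0 * v 1) (v 2) (v 3) + k0 (v 0) (v 1 * v 2) (v 3)
        - k0 (v 0) (v 1) (v 2 * v 3) + k0 (v 0) (v 1) (v 2) = 0
  simp only [k0, co_mul]
  ring

lemma kc1_d (v : Fin 3 → L6) :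
    dd (tr L6) 2 kc1 v = kc0 (fun i => ph (c4 1)⁻¹ (v i)) - kc0 v := by
  rw [dd_two, show (c4 1)⁻¹ = c4 3 from rfl]
  simp only [ph3]
  show k1 (v 1) (v 2) - k1 (v 0 * v 1) (v 2) + k1 (v 0) (v 1 * v 2) - k1 (v 0) (v 1)
    = k0 (fb (v 0)) (fb (v 1)) (fb (v 2)) - k0 (v 0) (v 1) (v 2)
  simp only [k0, k1, co_mul, fb, co_ve, tri_add]
  simp
  ring

/-- basis vectors -/
def bv (i : Fin 6) : L6 := ve (Pi.single i 1)

/-- the pairing with the invariant bivector -/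
def lam (B : L6 → L6 → ℤ) : ℤ := B (bv 0) (bv 3) + B (bv 1) (bv 4) + B (bv 2) (bv 5)

/-- antisymmetrisation -/
def alt (f : (Fin 2 → L6) → ℤ) (x y : L6) : ℤ := f ![x, y] - f ![y, x]

/-- biadditive -/
def Bi (B : L6 → L6 → ℤ) : Prop :=
  (∀ x y z, B (x * y) z = B x z + B y z) ∧ (∀ x y z, B x (y * z) = B x y + B x z)

lemma alt_bi (f : (Fin 2 → L6) → ℤ) (hf : dd (tr L6) 2 f = 0) : Bi (alt f) := by
  have C : ∀ x y z : L6, f ![y, z] - f ![x * y, z] + f ![x, y * z] - f ![x, y] = 0 := fun x y z => by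
    have := congrFun hf ![x, y, z]
    rw [dd_two] at this
    exact this
  have h1 : ∀ x y z, alt f (x * y) z = alt f x z + alt f y z := by
    intro x y z
    have a1 := C x y z
    have a2 := C z x y
    have a3 := C x z y
    unfold alt
    rw [mul_comm z x] at a2
    rw [mul_comm z y] at a3
    linear_combination -a1 - a2 + a3
  refine ⟨h1, fun x y z => ?_⟩
  have h2 : ∀ x y, alt f x y = - alt f y x := fun x y => by unfold alt; ring
  rw [h2, h1, h2 y, h2 z]
  ring

lemma bi_fb (B : L6 → L6 → ℤ) (h : Bi B) : Bi (fun x y => B (fb x) (fb y)) :=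
  ⟨fun x y z => by simp only [fb_mul, h.1], fun x y z => by simp only [fb_mul, h.2]⟩

lemma lam_fb (B : L6 → L6 → ℤ) (h : Bi B) : lam (fun x y => B (fb x) (fb y)) = lam B := by
  obtain ⟨h1, h2⟩ := h
  have z1 : ∀ z, B 1 z = 0 := fun z => by have := h1 1 1 z; rw [mul_one] at this; omega
  have z2 : ∀ z, B z 1 = 0 := fun z => by have := h2 z 1 1; rw [mul_one] at this; omega
  have i1 : ∀ x z, B x⁻¹ z = - B x z := fun x z => by
    have := h1 x x⁻¹ z; rw [mul_inv_cancel, z1] at this; omega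
  have i2 : ∀ x z, B z x⁻¹ = - B z x := fun x z => by
    have := h2 z x x⁻¹; rw [mul_inv_cancel, z2] at this; omega
  have e0 : fb (bv 0) = bv 0 := by decide
  have e1 : fb (bv 1) = (bv 2)⁻¹ := by decide
  have e2 : fb (bv 2) = (bv 0)⁻¹ * bv 1 := by decide
  have e3 : fb (bv 3) = bv 3 * bv 4 := by decide
  have e4 : fb (bv 4) = (bv 5)⁻¹ := by decide
  have e5 : fb (bv 5) = bv 4 := by decide
  simp only [lam, e0, e1, e2, e3, e4, e5, h1, h2, i1, i2]
  ring

lemma sumc_apply (f : (Fin 2 → L6) → ℤ) (x y : L6) : sumc ph f ![x, y]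
    = f ![x, y] + f ![fb x, fb y] + f ![fb (fb x), fb (fb y)]
      + f ![fb (fb (fb x)), fb (fb (fb y))] := by
  unfold sumc
  rw [sumC4]
  have p : ∀ h : C4, (fun i => ph h (![x, y] i)) = ![ph h x, ph h y] := fun h => by
    funext i; fin_cases i <;> rfl
  simp only [p]
  rw [show (c4 0)⁻¹ = c4 0 from rfl, show (c4 1)⁻¹ = c4 3 from rfl, show (c4 2)⁻¹ = c4 2 from rfl,
    show (c4 3)⁻¹ = c4 1 from rfl]
  simp only [ph0, ph1, ph2, ph3]

lemma lam_sumc (f : (Fin 2 → L6) → ℤ) (hf : dd (tr L6) 2 f = 0) :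
    lam (alt (sumc ph f)) = 4 * lam (alt f) := by
  have b1 := alt_bi f hf
  have b2 := bi_fb _ b1
  have b3 := bi_fb _ b2
  have l1 := lam_fb _ b1
  have l2 := lam_fb _ b2
  have l3 := lam_fb _ b3
  rw [l1] at l2
  rw [l2] at l3
  simp only [lam, alt, sumc_apply] at *
  omega

lemma lam_kc1 : lam (alt (sumc ph kc1)) = 2 := by
  simp only [lam, alt, sumc_apply]
  decide

lemma main_ne (he : dd (tr L6) 2 (sumc ph kc1) = 0) (x) :
    nu ph 2 x ≠ cls (tr L6) 2 (sumc ph kc1) he := by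
  intro hx
  obtain ⟨f, hf, rfl⟩ := cls_surj (tr L6) 2 x
  obtain ⟨h, hn⟩ := nu_cls ph 2 f hf
  rw [hn] at hx
  obtain ⟨b, hb⟩ := cls_eq 1 _ _ h he hx
  have h1 := lam_sumc f hf
  have h2 := lam_kc1
  have h3 : ∀ x y, alt (sumc ph f) x y = alt (sumc ph kc1) x y := by
    intro x y
    have e1 := congrFun hb ![x, y]
    have e2 := congrFun hb ![y, x]
    have e3 := dd_one b ![x, y]
    have e4 := dd_one b ![y, x]
    have e5 : (dd (tr L6) 1 b ![x, y] : ℤ) + sumc ph kc1 ![x, y] = sumc ph f ![x, y] := e1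
    have e6 : (dd (tr L6) 1 b ![y, x] : ℤ) + sumc ph kc1 ![y, x] = sumc ph f ![y, x] := e2
    have e7 : (dd (tr L6) 1 b ![x, y] : ℤ) = b (fun _ => y) - b (fun _ => x * y) + b (fun _ => x) := e3
    have e8 : (dd (tr L6) 1 b ![y, x] : ℤ) = b (fun _ => x) - b (fun _ => y * x) + b (fun _ => y) := e4
    rw [mul_comm y x] at e8
    unfold alt
    rw [← e5, ← e6, e7, e8]
    ring
  have h4 : lam (alt (sumc ph f)) = lam (alt (sumc ph kc1)) := by
    simp only [lam, h3]
  omega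

end AGPP

theorem conjecture_AGPP_is_false :
    ∃ (m n : ℕ), 0 < m ∧
      ∃ (φ : Multiplicative (ZMod m) →* MulAut (Crystal.Lat n)) (k : ℕ),
        ¬ Nonempty
          ((groupCohomology
              (Rep.trivial ℤ (SemidirectProduct (Crystal.Lat n) (Multiplicative (ZMod m)) φ) ℤ) k)
            ≃+ ((p : {p : ℕ × ℕ // p.1 + p.2 = k}) →
                groupCohomology
                  (Crystal.cohRep φ (1 : Representation ℤ (Multiplicative (ZMod m)) ℤ) p.1.2)
                  p.1.1)) :=
  ⟨4, 6, by norm_num, AGPP.ph, 4,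
    AGPP.not_iso AGPP.ph (AGPP.fg_lat 6 _ (MulEquiv.refl _)) AGPP.kc0 AGPP.kc0_cocycle AGPP.kc1
      AGPP.kc1_d AGPP.main_ne⟩
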